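/- arXiv:0706.2141 — 5 statements merged into one kernel-verified Lean document; each statement's English description precedes it below -/
import Mathlib

section
/- Let d ≥ 1 and let ρ̂ be a positive definite d×d complex density matrix with smallest eigenvalue λ > 0. Set β := d/λ and let T : M_d → M_d be the linear map T(b) = Tr(ρ̂·b)·I. Then the map b ↦ β·T(b) − b is completely positive: for every k ≥ 1 and every positive semidefinite matrix X on ℂ^k ⊗ ℂ^d, the matrix (id_{M_k} ⊗ (β·T − id))(X) is positive semidefinite. -/
open Matrix
open scoped ComplexOrder

/-- The tensor extension `id_{M_k} ⊗ Ψ` of a map `Ψ : M_d → M_d`, acting blockwise on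
matrices indexed by `Fin k × Fin d`. -/
def idTensor {k d : ℕ} (Ψ : Matrix (Fin d) (Fin d) ℂ → Matrix (Fin d) (Fin d) ℂ)
    (X : Matrix (Fin k × Fin d) (Fin k × Fin d) ℂ) :
    Matrix (Fin k × Fin d) (Fin k × Fin d) ℂ :=
  Matrix.of fun p q => Ψ (Matrix.of fun a b => X (p.1, a) (q.1, b)) p.2 q.2

/-!
For scalars `a i` and matrices `M i`, the Lagrange identity behind the Cauchy–Schwarz inequality
exhibits `b ↦ (∑ |a i|²) ∑ M i b (M i)ᴴ - (∑ a i M i) b (∑ a i M i)ᴴ` as a sum of conjugations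
`b ↦ V b Vᴴ`. Applied to the matrix units and the entries of `A`, it shows that
`b ↦ Tr(A Aᴴ) Tr(b) 1 - A b Aᴴ` is completely positive. Write `ρ = Bᴴ B`, take `A = B⁻¹` and
precompose with `b ↦ B b Bᴴ`: then `b ↦ Tr(ρ⁻¹) Tr(ρ b) 1 - b` is completely positive. Finally
`Tr(ρ⁻¹) ≤ d / λ`.
-/

section CompletelyPositive

variable {R l m n o ι : Type*}

/-- The ampliation `id ⊗ Ψ` of a map `Ψ` between matrix algebras, applying `Ψ` to each block of a
matrix indexed by `m × n`. Here `Ψ` is a bare function rather than a bundled linear map. -/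
def ampliation (Ψ : Matrix n n R → Matrix l l R) (X : Matrix (m × n) (m × n) R) :
    Matrix (m × l) (m × l) R :=
  of fun p q => Ψ (X.submatrix (Prod.mk p.1) (Prod.mk q.1)) p.2 q.2

open scoped Kronecker in
theorem ampliation_mul_mul_conjTranspose [Ring R] [StarRing R] [Fintype m] [DecidableEq m]
    [Fintype n] (V : Matrix l n R) (X : Matrix (m × n) (m × n) R) :
    ampliation (fun b => V * b * Vᴴ) X = ((1 : Matrix m m R) ⊗ₖ V) * X *
      ((1 : Matrix m m R) ⊗ₖ V)ᴴ := by
  ext ⟨i, a⟩ ⟨j, b⟩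
  simp [ampliation, mul_apply, Fintype.sum_prod_type, one_apply, Finset.sum_ite_irrel,
    apply_ite (star : R → R)]

section Ring

variable [Ring R] [PartialOrder R] [StarRing R]

/-- A map between matrix algebras is completely positive if all its ampliations by full matrix
algebras preserve positive semidefiniteness. -/
def IsCompletelyPositive (Ψ : Matrix n n R → Matrix l l R) : Prop :=
  ∀ (k : ℕ) (X : Matrix (Fin k × n) (Fin k × n) R), X.PosSemidef → (ampliation Ψ X).PosSemidef

namespace IsCompletelyPositive

theorem mul_mul_conjTranspose [Fintype n] [Finite l] (V : Matrix l n R) :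
    IsCompletelyPositive fun b : Matrix n n R => V * b * Vᴴ := fun k X hX => by
  rw [ampliation_mul_mul_conjTranspose]
  exact hX.mul_mul_conjTranspose_same _

theorem comp {Φ : Matrix l l R → Matrix o o R} {Ψ : Matrix n n R → Matrix l l R}
    (hΦ : IsCompletelyPositive Φ) (hΨ : IsCompletelyPositive Ψ) :
    IsCompletelyPositive fun b => Φ (Ψ b) :=
  fun k X hX => hΦ k _ (hΨ k X hX)

theorem add [AddLeftMono R] {Φ Ψ : Matrix n n R → Matrix l l R}
    (hΦ : IsCompletelyPositive Φ) (hΨ : IsCompletelyPositive Ψ) :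
    IsCompletelyPositive fun b => Φ b + Ψ b :=
  fun k X hX => (hΦ k X hX).add (hΨ k X hX)

theorem sum [AddLeftMono R] {s : Finset ι} {Ψ : ι → Matrix n n R → Matrix l l R}
    (hΨ : ∀ i ∈ s, IsCompletelyPositive (Ψ i)) :
    IsCompletelyPositive fun b => ∑ i ∈ s, Ψ i b := fun k X hX => by
  have ampliation_sum :
      ampliation (fun b => ∑ i ∈ s, Ψ i b) X = ∑ i ∈ s, ampliation (Ψ i) X := by
    ext p q
    simp only [ampliation, of_apply, Matrix.sum_apply]
  rw [ampliation_sum]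
  exact posSemidef_sum s fun i hi => hΨ i hi k X hX

end IsCompletelyPositive

end Ring

theorem IsCompletelyPositive.smul [CommRing R] [PartialOrder R] [StarRing R] [StarOrderedRing R]
    {c : R} (hc : 0 ≤ c) {Ψ : Matrix n n R → Matrix l l R} (hΨ : IsCompletelyPositive Ψ) :
    IsCompletelyPositive fun b => c • Ψ b :=
  fun k X hX => (hΨ k X hX).smul hc

end CompletelyPositive

section MatrixUnits

variable {R l n ι : Type*}

theorem lagrange_identity_conj [CommRing R] [StarRing R] [Fintype ι] [Fintype n]
    (a : ι → R) (M : ι → Matrix l n R) (b : Matrix n n R) :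
    ∑ i, ∑ j, (star (a j) • M i - star (a i) • M j) * b * (star (a j) • M i - star (a i) • M j)ᴴ =
      (2 : R) • ((∑ i, a i * star (a i)) • ∑ i, M i * b * (M i)ᴴ -
        (∑ i, a i • M i) * b * (∑ i, a i • M i)ᴴ) := by
  have expand (i j : ι) :
      (star (a j) • M i - star (a i) • M j) * b * (star (a j) • M i - star (a i) • M j)ᴴ =
        (a j * star (a j)) • (M i * b * (M i)ᴴ) + (a i * star (a i)) • (M j * b * (M j)ᴴ) -
        (a i • M i) * b * (a j • M j)ᴴ - (a j • M j) * b * (a i • M i)ᴴ := by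
    simp only [conjTranspose_sub, conjTranspose_smul, star_star, Matrix.sub_mul, Matrix.mul_sub,
      smul_mul, Matrix.mul_smul, smul_sub, smul_smul]
    module
  have square_swap : ∑ i, ∑ j, (a j • M j) * b * (a i • M i)ᴴ =
      (∑ i, a i • M i) * b * (∑ i, a i • M i)ᴴ := by
    simp only [conjTranspose_sum, Matrix.sum_mul, Matrix.mul_sum]
  have square : ∑ i, ∑ j, (a i • M i) * b * (a j • M j)ᴴ =
      (∑ i, a i • M i) * b * (∑ i, a i • M i)ᴴ := by
    rw [Finset.sum_comm, square_swap]
  simp only [expand, Finset.sum_sub_distrib, Finset.sum_add_distrib, square, square_swap,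
    ← Finset.smul_sum, ← Finset.sum_smul]
  module

theorem sum_single_mul_mul_conjTranspose_single [Semiring R] [StarRing R] [Fintype l]
    [DecidableEq l] [Fintype n] [DecidableEq n] (b : Matrix n n R) :
    ∑ p : l × n, single p.1 p.2 (1 : R) * b * (single p.1 p.2 (1 : R))ᴴ =
      b.trace • (1 : Matrix l l R) := by
  have conj_unit (p : l × n) :
      single p.1 p.2 (1 : R) * b * (single p.1 p.2 (1 : R))ᴴ = single p.1 p.1 (b p.2 p.2) := by
    simp only [conjTranspose_single, single_mul_mul_single, star_one, one_mul, mul_one]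
  simp only [conj_unit, Fintype.sum_prod_type_right, sum_single_eq_diagonal, trace, diag_apply,
    Finset.sum_smul, smul_one_eq_diagonal]

end MatrixUnits

section Trace

variable {𝕜 l n ι : Type*} [RCLike 𝕜] [Fintype n]

theorem isCompletelyPositive_sum_conj_sub_conj_sum [Finite l] [Fintype ι] (a : ι → 𝕜)
    (M : ι → Matrix l n 𝕜) :
    IsCompletelyPositive fun b : Matrix n n 𝕜 => (∑ i, a i * star (a i)) • ∑ i, M i * b * (M i)ᴴ -
      (∑ i, a i • M i) * b * (∑ i, a i • M i)ᴴ := by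
  have half_lagrange := (IsCompletelyPositive.sum (s := Finset.univ) fun i _ =>
    .sum (s := Finset.univ) fun j _ =>
      .mul_mul_conjTranspose (star (a j) • M i - star (a i) • M j)).smul
        (inv_nonneg.2 (zero_le_two (α := 𝕜)))
  simpa only [lagrange_identity_conj, inv_smul_smul₀ (two_ne_zero (α := 𝕜))] using half_lagrange

theorem isCompletelyPositive_trace_smul_one [Finite l] [DecidableEq l] :
    IsCompletelyPositive fun b : Matrix n n 𝕜 => b.trace • (1 : Matrix l l 𝕜) := by
  classical
  have := Fintype.ofFinite l
  simp only [← sum_single_mul_mul_conjTranspose_single]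
  exact .sum fun p _ => .mul_mul_conjTranspose (single p.1 p.2 1)

open scoped MatrixOrder in
theorem exists_eq_conjTranspose_mul_self_of_posSemidef {ρ : Matrix n n 𝕜}
    (hρ : ρ.PosSemidef) : ∃ B : Matrix n n 𝕜, ρ = Bᴴ * B := by
  classical exact CStarAlgebra.nonneg_iff_eq_star_mul_self.mp hρ.nonneg

theorem isCompletelyPositive_trace_mul_smul_one [Finite l] [DecidableEq l] {ρ : Matrix n n 𝕜}
    (hρ : ρ.PosSemidef) :
    IsCompletelyPositive fun b : Matrix n n 𝕜 => (ρ * b).trace • (1 : Matrix l l 𝕜) := by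
  obtain ⟨B, rfl⟩ := exists_eq_conjTranspose_mul_self_of_posSemidef hρ
  simpa only [trace_mul_cycle B _ Bᴴ] using
    isCompletelyPositive_trace_smul_one.comp (.mul_mul_conjTranspose B)

theorem isCompletelyPositive_trace_smul_trace_smul_one_sub_conj [Fintype l] [DecidableEq l]
    (A : Matrix l n 𝕜) :
    IsCompletelyPositive fun b : Matrix n n 𝕜 =>
      (A * Aᴴ).trace • (b.trace • (1 : Matrix l l 𝕜)) - A * b * Aᴴ := by
  classical
  have sum_units : ∑ p : l × n, A p.1 p.2 • single p.1 p.2 (1 : 𝕜) = A := by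
    simpa [Fintype.sum_prod_type, smul_single] using (matrix_eq_sum_single A).symm
  have sum_entries : ∑ p : l × n, A p.1 p.2 * star (A p.1 p.2) = (A * Aᴴ).trace := by
    simp [Fintype.sum_prod_type, trace, mul_apply]
  have h := isCompletelyPositive_sum_conj_sub_conj_sum (fun p : l × n => A p.1 p.2)
    fun p => single p.1 p.2 1
  simpa only [sum_units, sum_entries, sum_single_mul_mul_conjTranspose_single] using h

end Trace

section TraceInv

variable {𝕜 n : Type*} [RCLike 𝕜] [Fintype n] [DecidableEq n] {ρ : Matrix n n 𝕜}

theorem trace_inv_eq_sum_inv_eigenvalues (hρ : ρ.IsHermitian) (h0 : ∀ i, hρ.eigenvalues i ≠ 0) :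
    ρ⁻¹.trace = ∑ i, ((hρ.eigenvalues i)⁻¹ : 𝕜) := by
  let conjU := Unitary.conjStarAlgAut 𝕜 (Matrix n n 𝕜) hρ.eigenvectorUnitary
  let D : Matrix n n 𝕜 := diagonal fun i => ((hρ.eigenvalues i)⁻¹ : 𝕜)
  have diagonal_inv : diagonal (RCLike.ofReal ∘ hρ.eigenvalues) * D = 1 := by
    simp [D, diagonal_mul_diagonal, h0]
  have inv_eq : ρ⁻¹ = conjU D := inv_eq_right_inv <| by
    nth_rw 1 [hρ.spectral_theorem]
    rw [← map_mul, diagonal_inv, map_one]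
  rw [inv_eq, Unitary.conjStarAlgAut_apply, trace_mul_cycle, Unitary.coe_star_mul_self, one_mul,
    trace_diagonal]

theorem trace_inv_le_card_div_of_le_eigenvalues (hρ : ρ.IsHermitian) {c : ℝ} (hc : 0 < c)
    (hle : ∀ i, c ≤ hρ.eigenvalues i) : ρ⁻¹.trace ≤ ((Fintype.card n / c : ℝ) : 𝕜) := by
  rw [trace_inv_eq_sum_inv_eigenvalues hρ fun i => (hc.trans_le (hle i)).ne']
  calc ∑ i, ((hρ.eigenvalues i)⁻¹ : 𝕜) ≤ ∑ _i : n, ((c⁻¹ : ℝ) : 𝕜) :=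
        Finset.sum_le_sum fun i _ => by
          rw [← RCLike.ofReal_inv]
          exact RCLike.ofReal_le_ofReal.2 (inv_anti₀ hc (hle i))
    _ = ((Fintype.card n / c : ℝ) : 𝕜) := by simp [div_eq_mul_inv]

theorem isCompletelyPositive_trace_inv_smul_trace_mul_smul_one_sub_id (hρ : ρ.PosDef) :
    IsCompletelyPositive fun b : Matrix n n 𝕜 =>
      ρ⁻¹.trace • ((ρ * b).trace • (1 : Matrix n n 𝕜)) - b := by
  obtain ⟨B, rfl⟩ := exists_eq_conjTranspose_mul_self_of_posSemidef hρ.posSemidef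
  have hdet : IsUnit B.det :=
    B.isUnit_iff_isUnit_det.1 (isUnit_of_mul_isUnit_right hρ.isUnit)
  have trace_inv : (B⁻¹ * B⁻¹ᴴ).trace = (Bᴴ * B)⁻¹.trace := by
    rw [Matrix.mul_inv_rev, conjTranspose_nonsing_inv]
  have inv_conj_conj (b : Matrix n n 𝕜) : B⁻¹ * (B * b * Bᴴ) * B⁻¹ᴴ = b := by
    rw [Matrix.mul_assoc B, nonsing_inv_mul_cancel_left _ _ hdet, Matrix.mul_assoc,
      ← conjTranspose_mul, nonsing_inv_mul _ hdet, conjTranspose_one, Matrix.mul_one]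
  have h := (isCompletelyPositive_trace_smul_trace_smul_one_sub_conj B⁻¹).comp
    (.mul_mul_conjTranspose B)
  simpa only [trace_inv, trace_mul_cycle B _ Bᴴ, inv_conj_conj] using h

theorem cp_of_beta_smul_trace_map_sub_id_general (hρ : ρ.PosDef) {β : 𝕜} (hβ : ρ⁻¹.trace ≤ β) :
    IsCompletelyPositive fun b : Matrix n n 𝕜 =>
      β • ((ρ * b).trace • (1 : Matrix n n 𝕜)) - b := by
  have excess := (isCompletelyPositive_trace_mul_smul_one (l := n) hρ.posSemidef).smul
    (sub_nonneg.2 hβ)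
  simpa only [sub_smul, sub_add_sub_cancel] using
    excess.add (isCompletelyPositive_trace_inv_smul_trace_mul_smul_one_sub_id hρ)

end TraceInv

/-- Let `ρ` be a positive definite `d × d` density matrix with smallest
eigenvalue `lam > 0`, let `β = d / lam` and `T(b) = Tr(ρ b) • 1`.  Then `β • T - id` is
completely positive: for every `k ≥ 1`, `id_{M_k} ⊗ (β • T - id)` maps positive
semidefinite matrices to positive semidefinite matrices. -/
theorem cp_of_beta_smul_trace_map_sub_id
    (d : ℕ) (hd : 1 ≤ d)
    (ρ : Matrix (Fin d) (Fin d) ℂ) (hρ : ρ.PosDef) (hρtr : ρ.trace = 1)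
    (lam : ℝ) (hlam : 0 < lam)
    (hlow : ∀ i, lam ≤ hρ.1.eigenvalues i)
    (hmem : ∃ i, hρ.1.eigenvalues i = lam)
    (k : ℕ) (hk : 1 ≤ k)
    (X : Matrix (Fin k × Fin d) (Fin k × Fin d) ℂ) (hX : X.PosSemidef) :
    (idTensor (fun b => (((d : ℝ) / lam : ℝ) : ℂ) • ((ρ * b).trace • (1 : Matrix (Fin d) (Fin d) ℂ)) - b) X).PosSemidef := by
  have hβ : ρ⁻¹.trace ≤ (((d : ℝ) / lam : ℝ) : ℂ) := by
    simpa using trace_inv_le_card_div_of_le_eigenvalues hρ.1 hlam hlow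
  exact cp_of_beta_smul_trace_map_sub_id_general hρ hβ k X hX
end

section
/- Let A, B be positive semidefinite matrices on ℂ^{d₁} ⊗ ℂ^{d₂}, let A₁, B₁ be positive semidefinite on ℂ^{d₁} and A₂, B₂ positive semidefinite on ℂ^{d₂}, and let β ≥ 1. If A ≤ β·(A₁ ⊗ A₂) and B ≤ β·(B₁ ⊗ B₂) in the Loewner order, then for every t ∈ [0,1]: Tr(A^{1−t}·B^{t}) ≤ β·Tr(A₁^{1−t}·B₁^{t})·Tr(A₂^{1−t}·B₂^{t}). -/
open Matrix Filter
open scoped ComplexOrder Classical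

/-- The Kronecker product of a matrix on `(ℂ^d)^{⊗k}` and a matrix on `(ℂ^d)^{⊗(n-k)}`,
viewed as a matrix on `(ℂ^d)^{⊗n}` via the canonical identification of `Fin n` with
`Fin k ⊕ Fin (n-k)`. -/
def tkron {d n k : ℕ} (h : k ≤ n)
    (M : Matrix (Fin k → Fin d) (Fin k → Fin d) ℂ)
    (N : Matrix (Fin (n - k) → Fin d) (Fin (n - k) → Fin d) ℂ) :
    Matrix (Fin n → Fin d) (Fin n → Fin d) ℂ :=
  Matrix.of fun x y =>
    M (fun i => x ⟨i.1, lt_of_lt_of_le i.2 h⟩) (fun i => y ⟨i.1, lt_of_lt_of_le i.2 h⟩) *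
      N (fun j => x ⟨k + j.1, by have := j.2; omega⟩)
        (fun j => y ⟨k + j.1, by have := j.2; omega⟩)

/-- A sequence of states on `(ℂ^d)^{⊗n}` satisfies the *upper factorization property*
with constant `β` if `ω_n ≤ β·(ω_k ⊗ ω_{n-k})` in the Loewner order for all `0 < k < n`. -/
def UpperFact {d : ℕ} (ω : (n : ℕ) → Matrix (Fin n → Fin d) (Fin n → Fin d) ℂ)
    (β : ℝ) : Prop :=
  ∀ (n k : ℕ) (_ : 0 < k) (hkn : k < n),
    (β • tkron hkn.le (ω k) (ω (n - k)) - ω n).PosSemidef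

/-- A sequence of states on `(ℂ^d)^{⊗n}` satisfies the *lower factorization property*
with constant `α` if `ω_n ≥ α·(ω_k ⊗ ω_{n-k})` in the Loewner order for all `0 < k < n`. -/
def LowerFact {d : ℕ} (ω : (n : ℕ) → Matrix (Fin n → Fin d) (Fin n → Fin d) ℂ)
    (α : ℝ) : Prop :=
  ∀ (n k : ℕ) (_ : 0 < k) (hkn : k < n),
    (ω n - α • tkron hkn.le (ω k) (ω (n - k)) ).PosSemidef

/-- The power `A^t` of a positive semidefinite matrix by the functional calculus, with the
convention that `A^0` is the support projection of `A` (and, more generally, the power is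
taken only on the support).  Junk value `0` if `A` is not Hermitian. -/
noncomputable def mpow {I : Type*} [Fintype I] [DecidableEq I] (A : Matrix I I ℂ)
    (t : ℝ) : Matrix I I ℂ :=
  if hA : A.IsHermitian then
    (hA.eigenvectorUnitary : Matrix I I ℂ) *
      Matrix.diagonal (fun i =>
        if hA.eigenvalues i = 0 then (0 : ℂ) else ((hA.eigenvalues i ^ t : ℝ) : ℂ)) *
      star (hA.eigenvectorUnitary : Matrix I I ℂ)
  else 0

/-- The minimal Bayesian error probability (with uniform prior) for discriminating the
states `ω` and `σ` by a binary test `0 ≤ A ≤ I`. -/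
noncomputable def Pmin {I : Type*} [Fintype I] [DecidableEq I]
    (ω σ : Matrix I I ℂ) : ℝ :=
  sInf {v : ℝ | ∃ A : Matrix I I ℂ, A.PosSemidef ∧ (1 - A).PosSemidef ∧
    v = ((1 / 2 : ℂ) * (ω * (1 - A)).trace + (1 / 2 : ℂ) * (σ * A).trace).re}

/-- Extended-real-valued logarithm, with `log x = -∞` for `x ≤ 0`. -/
noncomputable def elog (x : ℝ) : EReal :=
  if x ≤ 0 then ⊥ else ((Real.log x : ℝ) : EReal)

open scoped Kronecker

/-!
By the Löwner–Heinz theorem `A ↦ A ^ t` is operator monotone for `0 < t ≤ 1`; letting `t → 0`, so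
is the support projection. As `X ↦ Tr (X Y)` is monotone for `Y ≥ 0`, both factors of
`Tr (A ^ s B ^ t)` may be replaced by the powers of the operators that dominate `A` and `B`. Powers
are homogeneous and multiplicative on Kronecker products, so the resulting trace factorizes, and for
`s = 1 - t` the constants combine to `β ^ (1 - t) * β ^ t = β`.
-/

section CFCKronecker

lemma cfc_algHom_pi {ι R : Type*} [Finite ι] [Ring R] [StarRing R] [TopologicalSpace R]
    [Algebra ℝ R] [ContinuousFunctionalCalculus ℝ R IsSelfAdjoint]
    (φ : (ι → ℝ) →ₐ[ℝ] R) (d : ι → ℝ) (hd : IsSelfAdjoint (φ d)) (f : ℝ → ℝ) :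
    cfc f (φ d) = φ (f ∘ d) := by
  let p := Lagrange.interpolate (Set.finite_range d).toFinset id f
  have hp : ∀ i, p.eval (d i) = f (d i) := fun i =>
    Lagrange.eval_interpolate_at_node f (Set.injOn_id _) (by simp)
  have hreal (x : ℝ) : spectrum ℝ x = {x} := spectrum.scalar_eq (A := ℝ) x
  have hspec : spectrum ℝ (φ d) ⊆ Set.range d := by
    rw [← Set.iUnion_singleton_eq_range, Set.iUnion_congr fun i => (hreal (d i)).symm,
      ← Pi.spectrum_eq]
    exact AlgHom.spectrum_apply_subset φ d
  have hfp : (spectrum ℝ (φ d)).EqOn f p.eval := fun x hx => by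
    obtain ⟨i, rfl⟩ := hspec hx
    exact (hp i).symm
  have hpd : Polynomial.aeval d p = f ∘ d := by
    ext i
    simp [hp]
  rw [cfc_congr hfp, cfc_polynomial p _ hd, Polynomial.aeval_algHom_apply, hpd]

variable {𝕜 I J : Type*} [RCLike 𝕜] [Fintype I] [DecidableEq I] [Fintype J] [DecidableEq J]

lemma cfc_unitary_conj_diagonal {U : Matrix I I 𝕜} (hU : U ∈ unitaryGroup I 𝕜) (d : I → ℝ)
    (f : ℝ → ℝ) :
    cfc f (U * diagonal (fun i => (d i : 𝕜)) * star U) =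
      U * diagonal (fun i => (f (d i) : 𝕜)) * star U := by
  let φ : (I → ℝ) →ₐ[ℝ] Matrix I I 𝕜 :=
    ((Unitary.conjStarAlgAut ℝ (Matrix I I 𝕜) ⟨U, hU⟩ : _ ≃⋆ₐ[ℝ] _) : _ →ₐ[ℝ] _).comp
      ((diagonalAlgHom ℝ).comp ((Algebra.ofId ℝ 𝕜).compLeft I))
  refine cfc_algHom_pi φ d ?_ f
  exact isHermitian_mul_mul_conjTranspose U (isHermitian_diagonal_of_self_adjoint _ (by ext; simp))

lemma cfc_kronecker {A : Matrix I I 𝕜} {B : Matrix J J 𝕜} (hA : A.IsHermitian)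
    (hB : B.IsHermitian) {f : ℝ → ℝ}
    (hf : ∀ x ∈ spectrum ℝ A, ∀ y ∈ spectrum ℝ B, f (x * y) = f x * f y) :
    cfc f (A ⊗ₖ B) = cfc f A ⊗ₖ cfc f B := by
  set U : Matrix I I 𝕜 := hA.eigenvectorUnitary.1
  set V : Matrix J J 𝕜 := hB.eigenvectorUnitary.1
  have kronecker_conj (D : Matrix I I 𝕜) (E : Matrix J J 𝕜) :
      (U * D * star U) ⊗ₖ (V * E * star V) = (U ⊗ₖ V) * (D ⊗ₖ E) * star (U ⊗ₖ V) := by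
    simp only [mul_kronecker_mul, star_eq_conjTranspose, conjTranspose_kronecker]
  have hAB : A ⊗ₖ B = (U ⊗ₖ V) * diagonal (fun p : I × J =>
      ((hA.eigenvalues p.1 * hB.eigenvalues p.2 : ℝ) : 𝕜)) * star (U ⊗ₖ V) := by
    conv_lhs => rw [hA.spectral_theorem, hB.spectral_theorem]
    simp [Unitary.conjStarAlgAut_apply, kronecker_conj, diagonal_kronecker_diagonal, U, V]
  have hUV := kronecker_mem_unitary hA.eigenvectorUnitary.2 hB.eigenvectorUnitary.2
  rw [hAB, cfc_unitary_conj_diagonal hUV, hA.cfc_eq, hB.cfc_eq, IsHermitian.cfc, IsHermitian.cfc,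
    Unitary.conjStarAlgAut_apply, Unitary.conjStarAlgAut_apply, kronecker_conj,
    diagonal_kronecker_diagonal]
  simp only [hf _ (hA.eigenvalues_mem_spectrum_real _) _ (hB.eigenvalues_mem_spectrum_real _),
    RCLike.ofReal_mul]
  rfl

end CFCKronecker

section TraceOrder

open scoped MatrixOrder

variable {𝕜 I : Type*} [RCLike 𝕜] [Fintype I]

lemma trace_mul_nonneg {X Y : Matrix I I 𝕜} (hX : 0 ≤ X) (hY : 0 ≤ Y) : 0 ≤ (X * Y).trace := by
  obtain ⟨C, rfl⟩ := CStarAlgebra.nonneg_iff_eq_star_mul_self.mp hY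
  rw [← Matrix.mul_assoc, trace_mul_comm, ← Matrix.mul_assoc]
  exact (hX.posSemidef.mul_mul_conjTranspose_same C).trace_nonneg

lemma trace_mul_le_trace_mul {X X' Y Y' : Matrix I I 𝕜} (hX : X ≤ X') (hY : Y ≤ Y')
    (hY₀ : 0 ≤ Y) (hX'₀ : 0 ≤ X') : (X * Y).trace ≤ (X' * Y').trace := by
  have hXY : (X * Y).trace ≤ (X' * Y).trace := by
    simpa [sub_mul] using trace_mul_nonneg (sub_nonneg.mpr hX) hY₀
  have hX'Y : (X' * Y).trace ≤ (X' * Y').trace := by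
    simpa [mul_sub] using trace_mul_nonneg hX'₀ (sub_nonneg.mpr hY)
  exact hXY.trans hX'Y

end TraceOrder

section Mpow

open scoped MatrixOrder

variable {I J : Type*} [Fintype I] [DecidableEq I] [Fintype J] [DecidableEq J]

/-- The real power that vanishes at the base `0` for every exponent, so that, unlike for
`Real.rpow`, also `suppRpow 0 0 = 0`. Its functional calculus is `mpow`, and `suppRpow 0` gives the
support projection. -/
noncomputable def suppRpow (t x : ℝ) : ℝ := if x = 0 then 0 else x ^ t

lemma suppRpow_of_ne_zero (t : ℝ) {x : ℝ} (hx : x ≠ 0) : suppRpow t x = x ^ t := if_neg hx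

lemma suppRpow_eq_rpow {t : ℝ} (ht : t ≠ 0) : suppRpow t = fun x => x ^ t := by
  ext x
  by_cases hx : x = 0 <;> simp [suppRpow, hx, Real.zero_rpow ht]

lemma suppRpow_nonneg (t : ℝ) {x : ℝ} (hx : 0 ≤ x) : 0 ≤ suppRpow t x := by
  unfold suppRpow
  split_ifs
  exacts [le_rfl, Real.rpow_nonneg hx t]

lemma suppRpow_mul (t : ℝ) {x y : ℝ} (hx : 0 ≤ x) (hy : 0 ≤ y) :
    suppRpow t (x * y) = suppRpow t x * suppRpow t y := by
  by_cases hx₀ : x = 0 <;> by_cases hy₀ : y = 0 <;> simp [suppRpow, *, Real.mul_rpow hx hy]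

lemma mpow_eq_cfc {A : Matrix I I ℂ} (hA : A.IsHermitian) (t : ℝ) :
    mpow A t = cfc (suppRpow t) A := by
  rw [mpow, dif_pos hA, hA.cfc_eq, IsHermitian.cfc, Unitary.conjStarAlgAut_apply]
  congr 3
  ext i
  exact (apply_ite Complex.ofReal _ _ _).symm

lemma mpow_nonneg {A : Matrix I I ℂ} (hA : 0 ≤ A) (t : ℝ) : 0 ≤ mpow A t := by
  rw [mpow_eq_cfc hA.posSemidef.isHermitian]
  exact cfc_nonneg fun x hx => suppRpow_nonneg t (spectrum_nonneg_of_nonneg hA hx)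

lemma mpow_smul {A : Matrix I I ℂ} (hA : 0 ≤ A) {c : ℝ} (hc : 0 < c) (t : ℝ) :
    mpow (c • A) t = c ^ t • mpow A t := by
  have hA' : IsSelfAdjoint A := hA.posSemidef.isHermitian
  have hcA : (c • A).IsHermitian := (smul_nonneg hc.le hA).posSemidef.isHermitian
  have hpow : (spectrum ℝ A).EqOn (fun x => suppRpow t (c * x)) fun x => c ^ t * suppRpow t x :=
    fun x hx => by
      simp only [suppRpow_mul t hc.le (spectrum_nonneg_of_nonneg hA hx),
        suppRpow_of_ne_zero t hc.ne']
  rw [mpow_eq_cfc hcA, mpow_eq_cfc hA', ← cfc_comp_const_mul c _ A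
    ((A.finite_real_spectrum.image _).continuousOn _), cfc_congr hpow,
    cfc_const_mul _ _ A (A.finite_real_spectrum.continuousOn _)]

lemma mpow_kronecker {A : Matrix I I ℂ} {B : Matrix J J ℂ} (hA : 0 ≤ A) (hB : 0 ≤ B) (t : ℝ) :
    mpow (A ⊗ₖ B) t = mpow A t ⊗ₖ mpow B t := by
  rw [mpow_eq_cfc (hA.posSemidef.kronecker hB.posSemidef).isHermitian,
    mpow_eq_cfc hA.posSemidef.isHermitian, mpow_eq_cfc hB.posSemidef.isHermitian]
  exact cfc_kronecker hA.posSemidef.isHermitian hB.posSemidef.isHermitian fun x hx y hy =>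
    suppRpow_mul t (spectrum_nonneg_of_nonneg hA hx) (spectrum_nonneg_of_nonneg hB hy)

lemma continuous_mpow (A : Matrix I I ℂ) : Continuous (mpow A) := by
  unfold mpow
  split_ifs with hA
  · refine (continuous_const.matrix_mul (Continuous.matrix_diagonal ?_)).matrix_mul continuous_const
    refine continuous_pi fun i => ?_
    split_ifs with hi
    · exact continuous_const
    · exact Complex.continuous_ofReal.comp (Real.continuous_const_rpow hi)
  · exact continuous_const

open scoped Matrix.Norms.L2Operator in
lemma mpow_le_mpow {A B : Matrix I I ℂ} (hA : 0 ≤ A) (hAB : A ≤ B) {t : ℝ}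
    (ht : t ∈ Set.Icc (0 : ℝ) 1) : mpow A t ≤ mpow B t := by
  have mpow_eq_rpow {C : Matrix I I ℂ} (hC : 0 ≤ C) {s : ℝ} (hs : s ≠ 0) : mpow C s = C ^ s := by
    rw [mpow_eq_cfc hC.posSemidef.isHermitian, CFC.rpow_eq_cfc_real hC, suppRpow_eq_rpow hs]
  have hpos : ∀ s ∈ Set.Ioc (0 : ℝ) 1, mpow A s ≤ mpow B s := fun s hs => by
    rw [mpow_eq_rpow hA hs.1.ne', mpow_eq_rpow (hA.trans hAB) hs.1.ne']
    exact CFC.rpow_le_rpow (Set.Ioc_subset_Icc_self hs) hAB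
  -- Mathlib's `C ^ (0 : ℝ)` is `1`, not the support projection `mpow C 0`, hence the limit `s → 0`.
  rw [← closure_Ioc zero_ne_one] at ht
  exact le_on_closure hpos (continuous_mpow A).continuousOn (continuous_mpow B).continuousOn ht

lemma trace_mpow_mul_mpow_nonneg {A B : Matrix I I ℂ} (hA : 0 ≤ A) (hB : 0 ≤ B) (s t : ℝ) :
    0 ≤ (mpow A s * mpow B t).trace :=
  trace_mul_nonneg (mpow_nonneg hA s) (mpow_nonneg hB t)

lemma trace_mpow_mul_mpow_mono {A A' B B' : Matrix I I ℂ} (hA : 0 ≤ A) (hAA' : A ≤ A')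
    (hB : 0 ≤ B) (hBB' : B ≤ B') {s t : ℝ} (hs : s ∈ Set.Icc (0 : ℝ) 1)
    (ht : t ∈ Set.Icc (0 : ℝ) 1) :
    (mpow A s * mpow B t).trace ≤ (mpow A' s * mpow B' t).trace :=
  trace_mul_le_trace_mul (mpow_le_mpow hA hAA' hs) (mpow_le_mpow hB hBB' ht)
    (mpow_nonneg hB t) (mpow_nonneg (hA.trans hAA') s)

lemma trace_mpow_smul_kronecker_mul {A₁ B₁ : Matrix I I ℂ} {A₂ B₂ : Matrix J J ℂ}
    (hA₁ : 0 ≤ A₁) (hB₁ : 0 ≤ B₁) (hA₂ : 0 ≤ A₂) (hB₂ : 0 ≤ B₂) {α β : ℝ} (hα : 0 < α)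
    (hβ : 0 < β) (s t : ℝ) :
    (mpow (α • (A₁ ⊗ₖ A₂)) s * mpow (β • (B₁ ⊗ₖ B₂)) t).trace =
      (α ^ s * β ^ t) • ((mpow A₁ s * mpow B₁ t).trace * (mpow A₂ s * mpow B₂ t).trace) := by
  rw [mpow_smul (hA₁.posSemidef.kronecker hA₂.posSemidef).nonneg hα,
    mpow_smul (hB₁.posSemidef.kronecker hB₂.posSemidef).nonneg hβ, smul_mul_smul_comm,
    mpow_kronecker hA₁ hA₂, mpow_kronecker hB₁ hB₂, ← mul_kronecker_mul, trace_smul,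
    trace_kronecker]

end Mpow

theorem trace_rpow_mul_rpow_le_of_kron_dominated_general
    {I J : Type*} [Fintype I] [DecidableEq I] [Fintype J] [DecidableEq J]
    {A B : Matrix (I × J) (I × J) ℂ} (hA : A.PosSemidef) (hB : B.PosSemidef)
    {A₁ B₁ : Matrix I I ℂ} (hA₁ : A₁.PosSemidef) (hB₁ : B₁.PosSemidef)
    {A₂ B₂ : Matrix J J ℂ} (hA₂ : A₂.PosSemidef) (hB₂ : B₂.PosSemidef)
    {α β : ℝ} (hα : 0 < α) (hβ : 0 < β)
    (hAdom : (α • (A₁ ⊗ₖ A₂) - A).PosSemidef) (hBdom : (β • (B₁ ⊗ₖ B₂) - B).PosSemidef)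
    {s t : ℝ} (hs : s ∈ Set.Icc (0 : ℝ) 1) (ht : t ∈ Set.Icc (0 : ℝ) 1) :
    ((mpow A s * mpow B t).trace).re ≤
      α ^ s * β ^ t * ((mpow A₁ s * mpow B₁ t).trace).re * ((mpow A₂ s * mpow B₂ t).trace).re := by
  have hle := trace_mpow_mul_mpow_mono hA.nonneg (le_iff.mpr hAdom) hB.nonneg (le_iff.mpr hBdom)
    hs ht
  rw [trace_mpow_smul_kronecker_mul hA₁.nonneg hB₁.nonneg hA₂.nonneg hB₂.nonneg hα hβ] at hle
  have him : ((mpow A₁ s * mpow B₁ t).trace).im = 0 :=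
    (Complex.nonneg_iff.mp (trace_mpow_mul_mpow_nonneg hA₁.nonneg hB₁.nonneg s t)).2.symm
  simpa [him, mul_assoc] using (Complex.le_def.mp hle).1

/-- If `A ≤ β·(A₁ ⊗ A₂)` and `B ≤ β·(B₁ ⊗ B₂)` for positive semidefinite
matrices, then `Tr(A^{1-t} B^t) ≤ β · Tr(A₁^{1-t} B₁^t) · Tr(A₂^{1-t} B₂^t)` for every
`t ∈ [0,1]`. -/
theorem trace_rpow_mul_rpow_le_of_kron_dominated
    (d₁ d₂ : ℕ)
    (A B : Matrix (Fin d₁ × Fin d₂) (Fin d₁ × Fin d₂) ℂ)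
    (hA : A.PosSemidef) (hB : B.PosSemidef)
    (A₁ B₁ : Matrix (Fin d₁) (Fin d₁) ℂ) (hA₁ : A₁.PosSemidef) (hB₁ : B₁.PosSemidef)
    (A₂ B₂ : Matrix (Fin d₂) (Fin d₂) ℂ) (hA₂ : A₂.PosSemidef) (hB₂ : B₂.PosSemidef)
    (β : ℝ) (hβ : 1 ≤ β)
    (hAdom : (β • (A₁ ⊗ₖ A₂) - A).PosSemidef)
    (hBdom : (β • (B₁ ⊗ₖ B₂) - B).PosSemidef) :
    ∀ t ∈ Set.Icc (0 : ℝ) 1,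
      ((mpow A (1 - t) * mpow B t).trace).re ≤
        β * ((mpow A₁ (1 - t) * mpow B₁ t).trace).re *
          ((mpow A₂ (1 - t) * mpow B₂ t).trace).re := by
  intro t ht
  have hβ₀ : 0 < β := one_pos.trans_le hβ
  simpa [← Real.rpow_add hβ₀] using trace_rpow_mul_rpow_le_of_kron_dominated_general
    hA hB hA₁ hB₁ hA₂ hB₂ hβ₀ hβ₀ hAdom hBdom (Set.Icc.mem_iff_one_sub_mem.mp ht) ht
end

section
/- Let (ω̂_n)_{n≥1} and (σ̂_n)_{n≥1} be sequences of density matrices, with ω̂_n and σ̂_n on (ℂ^d)^{⊗n}, both satisfying the upper factorization property with a common constant β ≥ 1 and the lower factorization property with a common constant α ∈ (0,1], and assume ω̂_1 and σ̂_1 are positive definite. Then for every t ∈ [0,1] the limit C(t) := lim_{n→∞} (1/n)·log Tr(ω̂_n^{1−t}·σ̂_n^{t}) exists and is finite, the function t ↦ C(t) is continuous on [0,1], and lim_{n→∞} (1/n)·log P_min(ω̂_n, σ̂_n) = min_{t∈[0,1]} C(t). -/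
open Matrix Filter
open scoped ComplexOrder Classical

/-!
The function `t ↦ Tr A^{1-t} B^t` is monotone in `A` and `B` for `t ∈ [0, 1]` (Löwner–Heinz) and
multiplicative over tensor products, so under two-sided factorization `log Tr ωₙ^{1-t} σₙ^t` is
almost additive in `n`, with an error uniform in `t`. Hence it equals `n C(t) + O(1)` uniformly in
`t`, which gives the limit and its continuity. The trace inequality of Audenaert et al. bounds the
error exponent by every `C(t)`.

For the converse, write `n = j m + r` and replace `ωₙ` and `σₙ` by their minorants
`α^j ωₘ^{⊗j} ⊗ ωᵣ` and `α^j σₘ^{⊗j} ⊗ σᵣ`. Up to a factor, the minimal error is bounded below by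
that of the classical Nussbaum–Szkoła distributions, whose log-likelihood ratio has moment
generating function `t ↦ Tr A^{1-t} B^t`. For `A = ωₘ` and `B = σₘ` this function takes the value
`1` at `0` and at `1`, so it has a critical point `t ∈ [0, 1]`. Tilting by `t` centres the
log-likelihood ratio of each block, so its second moment over `j` blocks is `O(j)`, and by
Chebyshev's inequality half of the tilted mass lies where the ratio is `O(√n)`. This costs only a
factor `e^{-O(√n)}`. The exponent obtained is at least `C(t) - O(1 / m)`, and `m → ∞`.
-/

section SpectralCalculus

open scoped MatrixOrder Matrix.Norms.L2Operator Kronecker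
open Unitary

variable {I J : Type*} [Fintype I] [DecidableEq I] [Fintype J] [DecidableEq J]

/-- The real diagonal matrices in the orthonormal basis given by the columns of `U`: the
star homomorphism `a ↦ U diag(a) U*`. -/
noncomputable def conjDiagonal (U : unitaryGroup I ℂ) : (I → ℝ) →⋆ₐ[ℝ] Matrix I I ℂ where
  toFun a := conjStarAlgAut ℝ _ U (diagonal fun i => (a i : ℂ))
  map_one' := by simp
  map_mul' a b := by simp only [← map_mul, diagonal_mul_diagonal, Pi.mul_apply, Complex.ofReal_mul]
  map_zero' := by simp
  map_add' a b := by simp only [← map_add, diagonal_add, Pi.add_apply, Complex.ofReal_add]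
  commutes' r := by
    rw [← AlgHomClass.commutes (conjStarAlgAut ℝ (Matrix I I ℂ) U) r, algebraMap_eq_diagonal]
    rfl
  map_star' a := by
    rw [← map_star, star_eq_conjTranspose, diagonal_conjTranspose]
    congr 2
    ext i
    simp

lemma conjDiagonal_apply (U : unitaryGroup I ℂ) (a : I → ℝ) :
    conjDiagonal U a = (U : Matrix I I ℂ) * diagonal (fun i => (a i : ℂ)) * (U : Matrix I I ℂ)ᴴ :=
  rfl

lemma conjDiagonal_nonneg (U : unitaryGroup I ℂ) {a : I → ℝ} (ha : 0 ≤ a) :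
    0 ≤ conjDiagonal U a :=
  map_nonneg _ ha

lemma conjDiagonal_mono (U : unitaryGroup I ℂ) : Monotone (conjDiagonal U) :=
  OrderHomClass.mono _

lemma exists_eq_conjDiagonal {A : Matrix I I ℂ} (hA : A.IsHermitian) :
    ∃ U a, A = conjDiagonal U a :=
  ⟨_, _, hA.spectral_theorem⟩

lemma exists_eq_conjDiagonal_of_nonneg {A : Matrix I I ℂ} (hA : 0 ≤ A) :
    ∃ U a, 0 ≤ a ∧ A = conjDiagonal U a :=
  have hA := nonneg_iff_posSemidef.1 hA
  ⟨_, _, hA.eigenvalues_nonneg, hA.1.spectral_theorem⟩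

lemma exists_eq_conjDiagonal_of_posDef {A : Matrix I I ℂ} (hA : A.PosDef) :
    ∃ U a, (∀ i, 0 < a i) ∧ A = conjDiagonal U a :=
  ⟨_, _, hA.eigenvalues_pos, hA.1.spectral_theorem⟩

lemma cfc_conjDiagonal (U : unitaryGroup I ℂ) (a : I → ℝ) (f : ℝ → ℝ) :
    cfc f (conjDiagonal U a) = conjDiagonal U (f ∘ a) := by
  have hspec : spectrum ℝ (conjDiagonal U a) ⊆ Set.range a := by
    refine (AlgHom.spectrum_apply_subset (conjDiagonal U) a).trans ?_
    rw [Pi.spectrum_eq]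
    exact Set.iUnion_subset fun i => (spectrum.scalar_eq (a i)).subset.trans (by simp)
  -- On the finite spectrum, `f` agrees with a polynomial.
  set p := Lagrange.interpolate (Finset.univ.image a) id f
  have hp (i : I) : p.eval (a i) = f (a i) :=
    Lagrange.eval_interpolate_at_node _ Function.injective_id.injOn
      (Finset.mem_image_of_mem a (Finset.mem_univ i))
  have hfp : (spectrum ℝ (conjDiagonal U a)).EqOn f p.eval := by
    intro x hx
    obtain ⟨i, rfl⟩ := hspec hx
    exact (hp i).symm
  have hsa : IsSelfAdjoint (conjDiagonal U a) := (IsSelfAdjoint.all a).map _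
  rw [cfc_congr hfp, cfc_polynomial p _ hsa, Polynomial.aeval_algHom_apply]
  congr 1
  ext i
  rw [Polynomial.aeval_pi_apply₂, Polynomial.coe_aeval_eq_eval, hp, Function.comp_apply]

lemma conjDiagonal_rpow (U : unitaryGroup I ℂ) {a : I → ℝ} (ha : 0 ≤ a) (t : ℝ) :
    conjDiagonal U a ^ t = conjDiagonal U (fun i => a i ^ t) := by
  rw [CFC.rpow_eq_cfc_real (conjDiagonal_nonneg U ha), cfc_conjDiagonal]
  rfl

lemma kronecker_conjDiagonal (U : unitaryGroup I ℂ) (V : unitaryGroup J ℂ) (a : I → ℝ)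
    (b : J → ℝ) :
    conjDiagonal U a ⊗ₖ conjDiagonal V b = conjDiagonal
      ⟨(U : Matrix I I ℂ) ⊗ₖ (V : Matrix J J ℂ), kronecker_mem_unitary U.2 V.2⟩
      (fun x => a x.1 * b x.2) := by
  rw [conjDiagonal_apply, conjDiagonal_apply, conjDiagonal_apply, mul_kronecker_mul,
    mul_kronecker_mul, diagonal_kronecker_diagonal, conjTranspose_kronecker]
  simp only [Complex.ofReal_mul]

lemma submatrix_mem_unitaryGroup {U : Matrix I I ℂ} (hU : U ∈ unitaryGroup I ℂ) (e : J ≃ I) :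
    U.submatrix e e ∈ unitaryGroup J ℂ := by
  rw [mem_unitaryGroup_iff, star_eq_conjTranspose, conjTranspose_submatrix, submatrix_mul_equiv,
    ← star_eq_conjTranspose, mem_unitaryGroup_iff.1 hU, submatrix_one_equiv]

lemma submatrix_conjDiagonal (U : unitaryGroup I ℂ) (e : J ≃ I) (a : I → ℝ) :
    (conjDiagonal U a).submatrix e e = conjDiagonal
      ⟨(U : Matrix I I ℂ).submatrix e e, submatrix_mem_unitaryGroup U.2 e⟩ (a ∘ e) := by
  simp only [conjDiagonal_apply, ← submatrix_mul_equiv _ _ _ e, conjTranspose_submatrix,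
    submatrix_diagonal_equiv]
  rfl

lemma kronecker_rpow {A : Matrix I I ℂ} {B : Matrix J J ℂ} (hA : 0 ≤ A) (hB : 0 ≤ B) (t : ℝ) :
    (A ⊗ₖ B) ^ t = (A ^ t) ⊗ₖ (B ^ t) := by
  obtain ⟨U, a, ha, rfl⟩ := exists_eq_conjDiagonal_of_nonneg hA
  obtain ⟨V, b, hb, rfl⟩ := exists_eq_conjDiagonal_of_nonneg hB
  have hab : 0 ≤ fun x : I × J => a x.1 * b x.2 := fun x => mul_nonneg (ha x.1) (hb x.2)
  rw [kronecker_conjDiagonal, conjDiagonal_rpow _ hab, conjDiagonal_rpow U ha,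
    conjDiagonal_rpow V hb, kronecker_conjDiagonal]
  simp only [Real.mul_rpow (ha _) (hb _)]

lemma submatrix_rpow {A : Matrix I I ℂ} (hA : 0 ≤ A) (e : J ≃ I) (t : ℝ) :
    (A.submatrix e e) ^ t = (A ^ t).submatrix e e := by
  obtain ⟨U, a, ha, rfl⟩ := exists_eq_conjDiagonal_of_nonneg hA
  have hae : 0 ≤ a ∘ e := fun j => ha (e j)
  rw [submatrix_conjDiagonal, conjDiagonal_rpow _ hae, conjDiagonal_rpow U ha,
    submatrix_conjDiagonal]
  rfl

lemma rpow_mul_rpow_of_nonneg {A : Matrix I I ℂ} (hA : 0 ≤ A) {s t : ℝ} (hs : 0 ≤ s)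
    (ht : 0 ≤ t) : A ^ s * A ^ t = A ^ (s + t) := by
  obtain ⟨U, a, ha, rfl⟩ := exists_eq_conjDiagonal_of_nonneg hA
  simp only [conjDiagonal_rpow U ha, ← map_mul]
  congr 1
  ext i
  exact (Real.rpow_add_of_nonneg (ha i) hs ht).symm

lemma smul_rpow {A : Matrix I I ℂ} (hA : 0 ≤ A) {c : ℝ} (hc : 0 ≤ c) (t : ℝ) :
    (c • A) ^ t = c ^ t • A ^ t := by
  obtain ⟨U, a, ha, rfl⟩ := exists_eq_conjDiagonal_of_nonneg hA
  rw [← map_smul, conjDiagonal_rpow U ha, conjDiagonal_rpow U (smul_nonneg hc ha), ← map_smul]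
  congr 1
  ext i
  exact Real.mul_rpow hc (ha i)

lemma posDef_rpow {A : Matrix I I ℂ} (hA : A.PosDef) (t : ℝ) : (A ^ t).PosDef :=
  isStrictlyPositive_iff_posDef.1 (.rpow A t (isStrictlyPositive_iff_posDef.2 hA))

lemma mpow_eq_rpow {A : Matrix I I ℂ} (hA : A.PosDef) (t : ℝ) : mpow A t = A ^ t := by
  rw [CFC.rpow_eq_cfc_real (nonneg_iff_posSemidef.2 hA.posSemidef), hA.1.cfc_eq, mpow,
    dif_pos hA.1]
  simp only [(hA.eigenvalues_pos _).ne', if_false]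
  rfl

end SpectralCalculus

section ChernoffTrace

open scoped MatrixOrder Matrix.Norms.L2Operator Kronecker

variable {I J : Type*} [Fintype I] [Fintype J]

lemma trace_mul_im_eq_zero {A B : Matrix I I ℂ} (hA : A.IsHermitian) (hB : B.IsHermitian) :
    (A * B).trace.im = 0 := by
  rw [← Complex.conj_eq_iff_im, ← Complex.star_def, ← trace_conjTranspose, conjTranspose_mul,
    hA.eq, hB.eq, trace_mul_comm]

lemma trace_mul_re_nonneg {A B : Matrix I I ℂ} (hA : 0 ≤ A) (hB : 0 ≤ B) :
    0 ≤ (A * B).trace.re := by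
  obtain ⟨C, rfl⟩ := CStarAlgebra.nonneg_iff_eq_star_mul_self.1 hA
  have h := (nonneg_iff_posSemidef.1 (star_right_conjugate_nonneg hB C)).trace_nonneg
  rw [trace_mul_comm, ← Matrix.mul_assoc] at h
  exact (Complex.le_def.1 h).1

lemma trace_mul_re_le_left {A A' B : Matrix I I ℂ} (hA : A ≤ A') (hB : 0 ≤ B) :
    (A * B).trace.re ≤ (A' * B).trace.re := by
  have h := trace_mul_re_nonneg (sub_nonneg.2 hA) hB
  rwa [Matrix.sub_mul, trace_sub, Complex.sub_re, sub_nonneg] at h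

lemma trace_mul_re_le_right {A B B' : Matrix I I ℂ} (hA : 0 ≤ A) (hB : B ≤ B') :
    (A * B).trace.re ≤ (A * B').trace.re := by
  simpa only [trace_mul_comm A] using trace_mul_re_le_left hB hA

lemma trace_mul_re_pos [Nonempty I] {A B : Matrix I I ℂ} (hA : A.PosDef) (hB : B.PosDef) :
    0 < (A * B).trace.re := by
  have hS := posDef_rpow hB (1 / 2)
  have hSS : B ^ (1 / 2 : ℝ) * B ^ (1 / 2 : ℝ) = B := by
    have hB0 : 0 ≤ B := nonneg_iff_posSemidef.2 hB.posSemidef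
    rw [rpow_mul_rpow_of_nonneg hB0 one_half_pos.le one_half_pos.le, add_halves, CFC.rpow_one B]
  have h := ((IsUnit.posDef_star_right_conjugate_iff hS.isUnit).2 hA).trace_pos
  rw [star_eq_conjTranspose, hS.1.eq, trace_mul_comm, ← Matrix.mul_assoc, hSS, trace_mul_comm] at h
  exact (Complex.lt_def.1 h).1

variable [DecidableEq I] [DecidableEq J]

/-- The quantity `Tr A^{1-t} B^t` of the quantum Chernoff bound. -/
noncomputable def chernoffTrace (A B : Matrix I I ℂ) (t : ℝ) : ℝ :=
  (A ^ (1 - t) * B ^ t).trace.re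

lemma trace_mpow_mul_mpow {A B : Matrix I I ℂ}
    (hA : A.PosDef) (hB : B.PosDef) (t : ℝ) :
    (mpow A (1 - t) * mpow B t).trace.re = chernoffTrace A B t := by
  rw [mpow_eq_rpow hA, mpow_eq_rpow hB, chernoffTrace]

lemma chernoffTrace_zero {A B : Matrix I I ℂ} (hA : 0 ≤ A) (hB : 0 ≤ B) :
    chernoffTrace A B 0 = A.trace.re := by
  rw [chernoffTrace, sub_zero, CFC.rpow_one A, CFC.rpow_zero B, Matrix.mul_one]

lemma chernoffTrace_one {A B : Matrix I I ℂ} (hA : 0 ≤ A) (hB : 0 ≤ B) :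
    chernoffTrace A B 1 = B.trace.re := by
  rw [chernoffTrace, sub_self, CFC.rpow_one B, CFC.rpow_zero A, Matrix.one_mul]

lemma chernoffTrace_self {A : Matrix I I ℂ} (hA : 0 ≤ A) {t : ℝ} (ht : t ∈ Set.Icc (0 : ℝ) 1) :
    chernoffTrace A A t = A.trace.re := by
  rw [chernoffTrace, rpow_mul_rpow_of_nonneg hA (sub_nonneg.2 ht.2) ht.1, sub_add_cancel,
    CFC.rpow_one A]

lemma chernoffTrace_pos [Nonempty I] {A B : Matrix I I ℂ} (hA : A.PosDef) (hB : B.PosDef)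
    (t : ℝ) : 0 < chernoffTrace A B t :=
  trace_mul_re_pos (posDef_rpow hA _) (posDef_rpow hB _)

lemma chernoffTrace_mono_left {A A' B : Matrix I I ℂ} (hA : A ≤ A')
    {t : ℝ} (ht : t ∈ Set.Icc (0 : ℝ) 1) : chernoffTrace A B t ≤ chernoffTrace A' B t :=
  trace_mul_re_le_left (CFC.rpow_le_rpow (Set.Icc.one_sub_mem ht) hA) CFC.rpow_nonneg

lemma chernoffTrace_mono_right {A B B' : Matrix I I ℂ} (hB : B ≤ B')
    {t : ℝ} (ht : t ∈ Set.Icc (0 : ℝ) 1) : chernoffTrace A B t ≤ chernoffTrace A B' t :=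
  trace_mul_re_le_right CFC.rpow_nonneg (CFC.rpow_le_rpow ht hB)

lemma chernoffTrace_mono {A A' B B' : Matrix I I ℂ} (hA : A ≤ A') (hB : B ≤ B') {t : ℝ}
    (ht : t ∈ Set.Icc (0 : ℝ) 1) : chernoffTrace A B t ≤ chernoffTrace A' B' t :=
  (chernoffTrace_mono_left hA ht).trans (chernoffTrace_mono_right hB ht)

lemma chernoffTrace_smul {A B : Matrix I I ℂ} (hA : 0 ≤ A) (hB : 0 ≤ B) {c : ℝ}
    (hc : 0 < c) (t : ℝ) : chernoffTrace (c • A) (c • B) t = c * chernoffTrace A B t := by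
  rw [chernoffTrace, smul_rpow hA hc.le, smul_rpow hB hc.le, smul_mul_smul_comm,
    ← Real.rpow_add hc, sub_add_cancel, Real.rpow_one, trace_smul, Complex.smul_re, smul_eq_mul,
    chernoffTrace]

lemma chernoffTrace_kronecker {A B : Matrix I I ℂ} {A' B' : Matrix J J ℂ} (hA : 0 ≤ A)
    (hB : 0 ≤ B) (hA' : 0 ≤ A') (hB' : 0 ≤ B') (t : ℝ) :
    chernoffTrace (A ⊗ₖ A') (B ⊗ₖ B') t = chernoffTrace A B t * chernoffTrace A' B' t := by
  have him : (A ^ (1 - t) * B ^ t).trace.im = 0 :=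
    trace_mul_im_eq_zero (nonneg_iff_posSemidef.1 CFC.rpow_nonneg).1
      (nonneg_iff_posSemidef.1 CFC.rpow_nonneg).1
  rw [chernoffTrace, kronecker_rpow hA hA', kronecker_rpow hB hB', ← mul_kronecker_mul,
    trace_kronecker, Complex.mul_re, him, zero_mul, sub_zero, chernoffTrace, chernoffTrace]

lemma chernoffTrace_submatrix {A B : Matrix I I ℂ} (hA : 0 ≤ A) (hB : 0 ≤ B) (e : J ≃ I)
    (t : ℝ) : chernoffTrace (A.submatrix e e) (B.submatrix e e) t = chernoffTrace A B t := by
  rw [chernoffTrace, submatrix_rpow hA, submatrix_rpow hB, submatrix_mul_equiv, chernoffTrace]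
  exact congrArg Complex.re (Equiv.sum_comp e fun i => (A ^ (1 - t) * B ^ t) i i)

/-- The trace inequality of Audenaert et al., with the positive part of `A - B` encoded in an upper
bound `Q` of `A` and `B`. -/
lemma trace_add_trace_le_chernoffTrace_add {A B Q : Matrix I I ℂ} (hA : 0 ≤ A) (hB : 0 ≤ B)
    (hAQ : A ≤ Q) (hBQ : B ≤ Q) {t : ℝ} (ht : t ∈ Set.Icc (0 : ℝ) 1) :
    A.trace.re + B.trace.re ≤ chernoffTrace A B t + Q.trace.re := by
  have h := trace_mul_re_nonneg
    (sub_nonneg.2 (CFC.rpow_le_rpow (Set.Icc.one_sub_mem ht) hAQ))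
    (sub_nonneg.2 (CFC.rpow_le_rpow ht hBQ))
  have hexpand : ((Q ^ (1 - t) - A ^ (1 - t)) * (Q ^ t - B ^ t)).trace.re
      = chernoffTrace Q Q t - chernoffTrace A Q t - chernoffTrace Q B t
        + chernoffTrace A B t := by
    simp only [Matrix.sub_mul, Matrix.mul_sub, trace_sub, Complex.sub_re, chernoffTrace]
    ring
  have hAA := chernoffTrace_mono_right (A := A) hAQ ht
  have hBB := chernoffTrace_mono_left (B := B) hBQ ht
  rw [chernoffTrace_self hA ht] at hAA
  rw [chernoffTrace_self hB ht] at hBB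
  rw [hexpand, chernoffTrace_self (hA.trans hAQ) ht] at h
  linarith

end ChernoffTrace

section BinaryTests

open scoped MatrixOrder Matrix.Norms.L2Operator

variable {I : Type*} [Fintype I] [DecidableEq I]

/-- The sum of the two error probabilities of the test `T`. -/
noncomputable def testError (A B T : Matrix I I ℂ) : ℝ :=
  (A * (1 - T)).trace.re + (B * T).trace.re

lemma testError_eq (A B T : Matrix I I ℂ) :
    ((1 / 2 : ℂ) * (A * (1 - T)).trace + (1 / 2 : ℂ) * (B * T).trace).re
      = testError A B T / 2 := by
  rw [← mul_add, testError, ← Complex.add_re]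
  simp only [Complex.mul_re]
  norm_num
  ring

lemma testError_nonneg {A B T : Matrix I I ℂ} (hA : 0 ≤ A) (hB : 0 ≤ B) (hT : 0 ≤ T)
    (hT1 : T ≤ 1) : 0 ≤ testError A B T :=
  add_nonneg (trace_mul_re_nonneg hA (sub_nonneg.2 hT1)) (trace_mul_re_nonneg hB hT)

lemma testError_mono {A A' B B' T : Matrix I I ℂ} (hA : A ≤ A') (hB : B ≤ B') (hT : 0 ≤ T)
    (hT1 : T ≤ 1) : testError A B T ≤ testError A' B' T :=
  add_le_add (trace_mul_re_le_left hA (sub_nonneg.2 hT1)) (trace_mul_re_le_left hB hT)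

lemma Pmin_le {A B T : Matrix I I ℂ} (hA : 0 ≤ A) (hB : 0 ≤ B) (hT : 0 ≤ T) (hT1 : T ≤ 1) :
    Pmin A B ≤ testError A B T / 2 := by
  refine csInf_le ⟨0, ?_⟩ ⟨T, nonneg_iff_posSemidef.1 hT, le_iff.1 hT1, (testError_eq A B T).symm⟩
  rintro _ ⟨S, hS, hS1, rfl⟩
  rw [testError_eq]
  have := testError_nonneg hA hB (nonneg_iff_posSemidef.2 hS) (le_iff.2 hS1)
  positivity

lemma le_Pmin {A B : Matrix I I ℂ} {c : ℝ} (h : ∀ T, 0 ≤ T → T ≤ 1 → c ≤ testError A B T / 2) :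
    c ≤ Pmin A B := by
  refine le_csInf ⟨_, 0, PosSemidef.zero, by simpa using PosSemidef.one, rfl⟩ ?_
  rintro _ ⟨T, hT, hT1, rfl⟩
  rw [testError_eq]
  exact h T (nonneg_iff_posSemidef.2 hT) (le_iff.2 hT1)

lemma Pmin_mono {A A' B B' : Matrix I I ℂ} (hA : 0 ≤ A) (hAA' : A ≤ A') (hB : 0 ≤ B)
    (hBB' : B ≤ B') : Pmin A B ≤ Pmin A' B' :=
  le_Pmin fun _ hT hT1 => (Pmin_le hA hB hT hT1).trans <|
    div_le_div_of_nonneg_right (testError_mono hAA' hBB' hT hT1) zero_le_two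

/-- The test is the spectral projection of `A - B` onto its positive part, and `Q` is the sum of
`B` and that positive part. -/
lemma exists_test_eq_sub_trace {A B : Matrix I I ℂ} (hA : A.IsHermitian) (hB : B.IsHermitian) :
    ∃ T Q : Matrix I I ℂ, 0 ≤ T ∧ T ≤ 1 ∧ A ≤ Q ∧ B ≤ Q ∧
      testError A B T = A.trace.re + B.trace.re - Q.trace.re := by
  obtain ⟨U, e, he⟩ := exists_eq_conjDiagonal (hA.sub hB)
  set p : I → ℝ := fun i => if 0 < e i then 1 else 0
  have hep : e * p = e ⊔ 0 := by
    ext i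
    rcases lt_or_ge 0 (e i) with h | h
    · simp [p, h, h.le]
    · simp [p, h, h.not_gt]
  have hpos : (A - B) * conjDiagonal U p = conjDiagonal U (e ⊔ 0) := by
    rw [he, ← map_mul, hep]
  refine ⟨conjDiagonal U p, B + conjDiagonal U (e ⊔ 0), ?_, ?_, ?_, ?_, ?_⟩
  · exact conjDiagonal_nonneg U fun i => by simp only [p]; split_ifs <;> norm_num
  · rw [← map_one (conjDiagonal U)]
    exact conjDiagonal_mono U fun i => by simp only [p]; split_ifs <;> norm_num
  · rw [← sub_le_iff_le_add', he]
    exact conjDiagonal_mono U le_sup_left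
  · exact le_add_of_nonneg_right (conjDiagonal_nonneg U le_sup_right)
  · simp only [← hpos, testError, Matrix.mul_sub, Matrix.sub_mul, Matrix.mul_one, trace_sub,
      trace_add, Complex.sub_re, Complex.add_re]
    ring

theorem Pmin_le_chernoffTrace {A B : Matrix I I ℂ} (hA : 0 ≤ A) (hB : 0 ≤ B) {t : ℝ}
    (ht : t ∈ Set.Icc (0 : ℝ) 1) : Pmin A B ≤ chernoffTrace A B t / 2 := by
  obtain ⟨T, Q, hT, hT1, hAQ, hBQ, hTQ⟩ := exists_test_eq_sub_trace
    (nonneg_iff_posSemidef.1 hA).1 (nonneg_iff_posSemidef.1 hB).1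
  have h := trace_add_trace_le_chernoffTrace_add hA hB hAQ hBQ ht
  linarith [Pmin_le hA hB hT hT1]

end BinaryTests

section Overlap

open scoped MatrixOrder Matrix.Norms.L2Operator

variable {I : Type*} [Fintype I] [DecidableEq I]

lemma trace_conjDiagonal_mul_conj (U V : unitaryGroup I ℂ) (a b : I → ℝ) (S : Matrix I I ℂ) :
    (conjDiagonal U a * (S * conjDiagonal V b * Sᴴ)).trace.re =
      ∑ i, ∑ j, a i * b j * ‖((U : Matrix I I ℂ)ᴴ * S * (V : Matrix I I ℂ)) i j‖ ^ 2 := by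
  set W := (U : Matrix I I ℂ)ᴴ * S * (V : Matrix I I ℂ) with hW
  have hcycle : (conjDiagonal U a * (S * conjDiagonal V b * Sᴴ)).trace =
      (diagonal (fun i => (a i : ℂ)) * (W * diagonal (fun j => (b j : ℂ)) * Wᴴ)).trace := by
    simp only [hW, conjDiagonal_apply, conjTranspose_mul, conjTranspose_conjTranspose,
      Matrix.mul_assoc]
    rw [trace_mul_comm]
    simp only [Matrix.mul_assoc]
  rw [hcycle, trace, Complex.re_sum]
  refine Finset.sum_congr rfl fun i _ => ?_
  rw [diag_apply, diagonal_mul, Matrix.mul_apply, Finset.mul_sum, Complex.re_sum]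
  refine Finset.sum_congr rfl fun j _ => ?_
  rw [mul_diagonal, conjTranspose_apply, mul_right_comm (W i j), Complex.star_def,
    Complex.mul_conj, Complex.normSq_eq_norm_sq, ← Complex.ofReal_mul, ← Complex.ofReal_mul,
    Complex.ofReal_re]
  ring

lemma mul_self_le_self_of_le_one {T : Matrix I I ℂ} (hT : 0 ≤ T) (hT1 : T ≤ 1) : T * T ≤ T := by
  simpa only [pow_one, pow_two] using CStarAlgebra.pow_antitone hT hT1 one_le_two

lemma sum_mul_norm_sq_le_trace_mul (U V : unitaryGroup I ℂ) {a : I → ℝ} (ha : 0 ≤ a)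
    {T : Matrix I I ℂ} (hT : 0 ≤ T) (hT1 : T ≤ 1) :
    ∑ i, ∑ j, a i * ‖((U : Matrix I I ℂ)ᴴ * T * (V : Matrix I I ℂ)) i j‖ ^ 2
      ≤ (conjDiagonal U a * T).trace.re := by
  have h := trace_mul_re_le_right (conjDiagonal_nonneg U ha) (mul_self_le_self_of_le_one hT hT1)
  have hTT : T * T = T * conjDiagonal V 1 * Tᴴ := by
    rw [map_one, Matrix.mul_one, (nonneg_iff_posSemidef.1 hT).1.eq]
  rw [hTT, trace_conjDiagonal_mul_conj] at h
  simpa only [Pi.one_apply, mul_one] using h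

/-- Splitting `U* V = U* (1 - T) V + U* T V` bounds every overlap `|⟨uᵢ, vⱼ⟩|²` by the two
contributions to the error of the test `T`. -/
lemma sum_min_mul_norm_sq_le_testError (U V : unitaryGroup I ℂ) {a b : I → ℝ} (ha : 0 ≤ a)
    (hb : 0 ≤ b) {T : Matrix I I ℂ} (hT : 0 ≤ T) (hT1 : T ≤ 1) :
    ∑ i, ∑ j, min (a i) (b j) * ‖((U : Matrix I I ℂ)ᴴ * (V : Matrix I I ℂ)) i j‖ ^ 2
      ≤ 2 * testError (conjDiagonal U a) (conjDiagonal V b) T := by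
  have hA := sum_mul_norm_sq_le_trace_mul U V ha (sub_nonneg.2 hT1) (sub_le_self 1 hT)
  have hB := sum_mul_norm_sq_le_trace_mul V U hb hT hT1
  rw [Finset.sum_comm] at hB
  refine le_trans ?_ (mul_le_mul_of_nonneg_left (add_le_add hA hB) zero_le_two)
  simp only [← Finset.sum_add_distrib, Finset.mul_sum]
  refine Finset.sum_le_sum fun i _ => Finset.sum_le_sum fun j _ => ?_
  set u := ((U : Matrix I I ℂ)ᴴ * (1 - T) * (V : Matrix I I ℂ)) i j with hu
  set v := ((V : Matrix I I ℂ)ᴴ * T * (U : Matrix I I ℂ)) j i with hv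
  have hsplit : ((U : Matrix I I ℂ)ᴴ * (V : Matrix I I ℂ)) i j = u + star v := by
    rw [hu, hv, ← conjTranspose_apply, conjTranspose_mul, conjTranspose_mul,
      conjTranspose_conjTranspose, (nonneg_iff_posSemidef.1 hT).1.eq, ← Matrix.mul_assoc,
      ← Matrix.add_apply, ← Matrix.add_mul, ← Matrix.mul_add, sub_add_cancel, Matrix.mul_one]
  have hnorm : ‖u + star v‖ ^ 2 ≤ 2 * (‖u‖ ^ 2 + ‖v‖ ^ 2) :=
    (pow_le_pow_left₀ (norm_nonneg _) (norm_add_le u (star v)) 2).trans <| by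
      simpa only [norm_star] using add_sq_le
  calc min (a i) (b j) * ‖((U : Matrix I I ℂ)ᴴ * (V : Matrix I I ℂ)) i j‖ ^ 2
      ≤ min (a i) (b j) * (2 * (‖u‖ ^ 2 + ‖v‖ ^ 2)) := by
        rw [hsplit]
        exact mul_le_mul_of_nonneg_left hnorm (le_min (ha i) (hb j))
    _ = 2 * (min (a i) (b j) * ‖u‖ ^ 2 + min (a i) (b j) * ‖v‖ ^ 2) := by ring
    _ ≤ 2 * (a i * ‖u‖ ^ 2 + b j * ‖v‖ ^ 2) := by
        gcongr
        exacts [min_le_left _ _, min_le_right _ _]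

end Overlap

section ExpSum

variable {ι : Type*} [Fintype ι]

/-- The exponential sum with weights `c` and exponents `y`, i.e. the moment generating function of
the measure `∑ₓ c x • δ_{y x}`. -/
noncomputable def expSum (c y : ι → ℝ) (t : ℝ) : ℝ :=
  ∑ x, c x * Real.exp (t * y x)

lemma contDiff_expSum (c y : ι → ℝ) {n : WithTop ℕ∞} : ContDiff ℝ n (expSum c y) := by
  unfold expSum
  fun_prop

lemma deriv_expSum (c y : ι → ℝ) : deriv (expSum c y) = expSum (c * y) y := by
  ext t
  refine HasDerivAt.deriv (HasDerivAt.fun_sum fun x _ => ?_)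
  refine (((hasDerivAt_mul_const (y x)).exp).const_mul (c x)).congr_deriv ?_
  rw [Pi.mul_apply]
  ring

lemma iteratedDeriv_expSum (c y : ι → ℝ) (k : ℕ) :
    iteratedDeriv k (expSum c y) = expSum (c * y ^ k) y := by
  induction k with
  | zero => rw [iteratedDeriv_zero, pow_zero, mul_one]
  | succ k ih => rw [iteratedDeriv_succ, ih, deriv_expSum, pow_succ, mul_assoc]

lemma exp_neg_mul_one_sub_le_exp_neg_abs (y : ℝ) {L : ℝ} (hL : 0 < L) :
    Real.exp (-L) * (1 - y ^ 2 / L ^ 2) ≤ Real.exp (-|y|) := by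
  rcases le_total |y| L with h | h
  · calc Real.exp (-L) * (1 - y ^ 2 / L ^ 2) ≤ Real.exp (-L) * 1 := by
          gcongr
          exact sub_le_self 1 (by positivity)
      _ ≤ Real.exp (-|y|) := by rw [mul_one]; gcongr
  · have h1 : 1 ≤ y ^ 2 / L ^ 2 := by
      rw [one_le_div (by positivity), ← sq_abs y]
      gcongr
    exact (mul_nonpos_of_nonneg_of_nonpos (Real.exp_pos _).le (sub_nonpos.2 h1)).trans
      (Real.exp_pos _).le

lemma exp_mul_mul_exp_neg_abs_le_min (y : ℝ) {t : ℝ} (ht : t ∈ Set.Icc (0 : ℝ) 1) :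
    Real.exp (t * y) * Real.exp (-|y|) ≤ min 1 (Real.exp y) := by
  rw [← Real.exp_add, ← Real.exp_zero, ← Real.exp_monotone.map_min]
  refine Real.exp_le_exp.2 (le_min ?_ ?_)
  · nlinarith [ht.1, ht.2, le_abs_self y, abs_nonneg y]
  · nlinarith [ht.1, ht.2, neg_abs_le y, abs_nonneg y]

/-- A Chebyshev estimate: the second derivative is the second moment of `y` under the tilted
weights `c x * exp (t * y x)`. -/
lemma exp_neg_mul_expSum_sub_le_sum_min {c : ι → ℝ} (hc : 0 ≤ c) (y : ι → ℝ) {t L : ℝ}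
    (ht : t ∈ Set.Icc (0 : ℝ) 1) (hL : 0 < L) :
    Real.exp (-L) * (expSum c y t - iteratedDeriv 2 (expSum c y) t / L ^ 2)
      ≤ ∑ x, c x * min 1 (Real.exp (y x)) := by
  rw [iteratedDeriv_expSum, expSum, expSum, Finset.sum_div, ← Finset.sum_sub_distrib,
    Finset.mul_sum]
  refine Finset.sum_le_sum fun x _ => ?_
  calc _ = c x * (Real.exp (t * y x) * (Real.exp (-L) * (1 - y x ^ 2 / L ^ 2))) := by
        simp only [Pi.mul_apply, Pi.pow_apply]
        ring
    _ ≤ c x * (Real.exp (t * y x) * Real.exp (-|y x|)) := by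
        gcongr
        exacts [hc x, exp_neg_mul_one_sub_le_exp_neg_abs _ hL]
    _ ≤ c x * min 1 (Real.exp (y x)) :=
        mul_le_mul_of_nonneg_left (exp_mul_mul_exp_neg_abs_le_min _ ht) (hc x)

end ExpSum

section PminLowerBound

open scoped MatrixOrder Matrix.Norms.L2Operator

variable {I : Type*} [Fintype I] [DecidableEq I]

/-- The weights are the first Nussbaum–Szkoła distribution `aᵢ |⟨uᵢ, vⱼ⟩|²` of the
eigendecompositions `A = ∑ aᵢ uᵢ uᵢ*` and `B = ∑ bⱼ vⱼ vⱼ*`, and the exponents are the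
log-likelihood ratios `log (bⱼ / aᵢ)`. -/
lemma exists_chernoffTrace_eq_expSum {A B : Matrix I I ℂ} (hA : A.PosDef) (hB : B.PosDef) :
    ∃ c y : I × I → ℝ, 0 ≤ c ∧ chernoffTrace A B = expSum c y ∧
      ∑ x, c x * min 1 (Real.exp (y x)) ≤ 4 * Pmin A B := by
  obtain ⟨U, a, ha, rfl⟩ := exists_eq_conjDiagonal_of_posDef hA
  obtain ⟨V, b, hb, rfl⟩ := exists_eq_conjDiagonal_of_posDef hB
  have ha0 : 0 ≤ a := fun i => (ha i).le
  have hb0 : 0 ≤ b := fun j => (hb j).le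
  set w : I → I → ℝ := fun i j => ‖((U : Matrix I I ℂ)ᴴ * (V : Matrix I I ℂ)) i j‖ ^ 2
  refine ⟨fun x => a x.1 * w x.1 x.2, fun x => Real.log (b x.2 / a x.1),
    fun x => mul_nonneg (ha0 _) (sq_nonneg _), ?_, ?_⟩
  · ext t
    have h := trace_conjDiagonal_mul_conj U V (fun i => a i ^ (1 - t)) (fun j => b j ^ t) 1
    rw [conjTranspose_one, Matrix.mul_one, Matrix.one_mul, Matrix.mul_one] at h
    rw [chernoffTrace, conjDiagonal_rpow U ha0, conjDiagonal_rpow V hb0, h, expSum,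
      Fintype.sum_prod_type]
    refine Finset.sum_congr rfl fun i _ => Finset.sum_congr rfl fun j _ => ?_
    rw [mul_comm t, ← Real.rpow_def_of_pos (div_pos (hb j) (ha i)), Real.div_rpow (hb0 j) (ha0 i),
      Real.rpow_sub (ha i), Real.rpow_one]
    ring
  · have hmin : ∀ x : I × I, a x.1 * w x.1 x.2 * min 1 (Real.exp (Real.log (b x.2 / a x.1)))
        = min (a x.1) (b x.2) * w x.1 x.2 := fun x => by
      rw [Real.exp_log (div_pos (hb _) (ha _)), mul_right_comm, mul_min_of_nonneg _ _ (ha0 _),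
        mul_one, mul_div_cancel₀ _ (ha _).ne']
    have hle : (∑ x : I × I, min (a x.1) (b x.2) * w x.1 x.2) / 4
        ≤ Pmin (conjDiagonal U a) (conjDiagonal V b) := le_Pmin fun T hT hT1 => by
      rw [Fintype.sum_prod_type]
      linarith [sum_min_mul_norm_sq_le_testError U V ha0 hb0 hT hT1]
    simp only [hmin]
    linarith

lemma contDiff_chernoffTrace {A B : Matrix I I ℂ} (hA : A.PosDef) (hB : B.PosDef)
    {n : WithTop ℕ∞} : ContDiff ℝ n (chernoffTrace A B) := by
  obtain ⟨c, y, -, h, -⟩ := exists_chernoffTrace_eq_expSum hA hB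
  exact h ▸ contDiff_expSum c y

lemma continuous_log_chernoffTrace [Nonempty I] {A B : Matrix I I ℂ} (hA : A.PosDef)
    (hB : B.PosDef) : Continuous fun t => Real.log (chernoffTrace A B t) :=
  (contDiff_chernoffTrace hA hB (n := 0)).continuous.log fun t => (chernoffTrace_pos hA hB t).ne'

lemma exists_deriv_chernoffTrace_eq_zero {A B : Matrix I I ℂ} (hA : A.PosDef) (hB : B.PosDef)
    (hAB : A.trace = B.trace) :
    ∃ t ∈ Set.Icc (0 : ℝ) 1, deriv (chernoffTrace A B) t = 0 := by
  obtain ⟨t, ht, h⟩ := exists_deriv_eq_zero zero_lt_one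
    (contDiff_chernoffTrace hA hB (n := 0)).continuous.continuousOn <| by
      rw [chernoffTrace_zero hA.posSemidef.nonneg hB.posSemidef.nonneg,
        chernoffTrace_one hA.posSemidef.nonneg hB.posSemidef.nonneg, hAB]
  exact ⟨t, Set.Ioo_subset_Icc_self ht, h⟩

/-- Under the tilted weights at `t`, Chebyshev's inequality puts at least half of the mass on
log-likelihood ratios of absolute value at most `L`. -/
lemma exp_neg_mul_chernoffTrace_le_Pmin {A B : Matrix I I ℂ} (hA : A.PosDef) (hB : B.PosDef)
    {t L : ℝ} (ht : t ∈ Set.Icc (0 : ℝ) 1) (hL : 0 < L)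
    (hcurv : 2 * iteratedDeriv 2 (chernoffTrace A B) t ≤ L ^ 2 * chernoffTrace A B t) :
    Real.exp (-L) * chernoffTrace A B t / 8 ≤ Pmin A B := by
  obtain ⟨c, y, hc, h, hmin⟩ := exists_chernoffTrace_eq_expSum hA hB
  have hcheb := (exp_neg_mul_expSum_sub_le_sum_min hc y ht hL).trans hmin
  rw [← h] at hcheb
  have hhalf : iteratedDeriv 2 (chernoffTrace A B) t / L ^ 2 ≤ chernoffTrace A B t / 2 := by
    rw [div_le_iff₀ (by positivity)]
    linarith
  have hexp := mul_le_mul_of_nonneg_left (sub_le_sub_left hhalf (chernoffTrace A B t))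
    (Real.exp_pos (-L)).le
  linarith

lemma Pmin_pos [Nonempty I] {A B : Matrix I I ℂ} (hA : A.PosDef) (hB : B.PosDef) :
    0 < Pmin A B := by
  have hF := chernoffTrace_pos hA hB 0
  set F := chernoffTrace A B
  set L := 1 + 2 * |iteratedDeriv 2 F 0| / F 0
  have hL : 1 ≤ L := le_add_of_nonneg_right (by positivity)
  have hcurv : 2 * iteratedDeriv 2 F 0 ≤ L ^ 2 * F 0 :=
    calc 2 * iteratedDeriv 2 F 0 ≤ 2 * |iteratedDeriv 2 F 0| := by gcongr; exact le_abs_self _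
      _ ≤ L * F 0 := by
        rw [add_mul, div_mul_cancel₀ _ hF.ne']
        linarith
      _ ≤ L ^ 2 * F 0 := by
        gcongr
        exact le_self_pow₀ hL two_ne_zero
  have h := exp_neg_mul_chernoffTrace_le_Pmin hA hB ⟨le_rfl, zero_le_one⟩
    (zero_lt_one.trans_le hL) hcurv
  exact lt_of_lt_of_le (by positivity) h

lemma log_Pmin_le_log_chernoffTrace [Nonempty I] {A B : Matrix I I ℂ} (hA : A.PosDef)
    (hB : B.PosDef) {t : ℝ} (ht : t ∈ Set.Icc (0 : ℝ) 1) :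
    Real.log (Pmin A B) ≤ Real.log (chernoffTrace A B t) := by
  refine Real.log_le_log (Pmin_pos hA hB) ?_
  linarith [Pmin_le_chernoffTrace hA.posSemidef.nonneg hB.posSemidef.nonneg ht,
    chernoffTrace_pos hA hB t]

end PminLowerBound

section CriticalPoint

variable {f g : ℝ → ℝ} {t : ℝ}

lemma iteratedDeriv_two_mul_div_of_deriv_eq_zero (hf : ContDiffAt ℝ 2 f t)
    (hg : ContDiffAt ℝ 2 g t) (hf' : deriv f t = 0) (hft : f t ≠ 0) (hgt : g t ≠ 0) :
    iteratedDeriv 2 (f * g) t / (f * g) t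
      = iteratedDeriv 2 f t / f t + iteratedDeriv 2 g t / g t := by
  have hmul :
      iteratedDeriv 2 (f * g) t = f t * iteratedDeriv 2 g t + iteratedDeriv 2 f t * g t := by
    simp [iteratedDeriv_mul hf hg, Finset.sum_range_succ, hf']
  rw [hmul, Pi.mul_apply]
  field_simp
  ring

/-- In general `F'' / F` for `F = f ^ j * g` is quadratic in `j`; at a critical point of `f` the
quadratic term `j ^ 2 * (f' / f) ^ 2` and the cross term vanish. -/
lemma iteratedDeriv_two_pow_mul_div_of_deriv_eq_zero (hf : ContDiffAt ℝ 2 f t)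
    (hg : ContDiffAt ℝ 2 g t) (hf' : deriv f t = 0) (hft : f t ≠ 0) (hgt : g t ≠ 0) (j : ℕ) :
    iteratedDeriv 2 (f ^ j * g) t / (f ^ j * g) t
      = j * (iteratedDeriv 2 f t / f t) + iteratedDeriv 2 g t / g t := by
  induction j with
  | zero => simp only [pow_zero, one_mul, Nat.cast_zero, zero_mul, zero_add]
  | succ j ih =>
    have hfg : ContDiffAt ℝ 2 (f ^ j * g) t := (hf.pow j).mul hg
    rw [pow_succ', mul_assoc, iteratedDeriv_two_mul_div_of_deriv_eq_zero hf hfg hf' hft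
      (mul_ne_zero (pow_ne_zero j hft) hgt), ih]
    push_cast
    ring

end CriticalPoint

section AlmostAdditiveSequences

/-- Sequences that are additive on positive indices up to the constant error `K`. -/
def AlmostAdditive (f : ℕ → ℝ) (K : ℝ) : Prop :=
  ∀ k m, 0 < k → 0 < m → |f (k + m) - (f k + f m)| ≤ K

namespace AlmostAdditive

variable {f : ℕ → ℝ} {K : ℝ}

lemma nonneg (h : AlmostAdditive f K) : 0 ≤ K :=
  (abs_nonneg _).trans (h 1 1 one_pos one_pos)

lemma neg (h : AlmostAdditive f K) : AlmostAdditive (-f) K := fun k m hk hm => by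
  rw [← abs_neg]
  convert h k m hk hm using 2
  simp only [Pi.neg_apply]
  ring

lemma natCast_mul_sub_le (h : AlmostAdditive f K) {n : ℕ} (hn : 0 < n) :
    n * (f 1 - K) ≤ f n := by
  induction n, hn using Nat.le_induction with
  | base => simpa using h.nonneg
  | succ n hn ih =>
    have := (abs_le.1 (h n 1 hn one_pos)).1
    push_cast
    linarith

lemma exists_tendsto_div_and_le (h : AlmostAdditive f K) :
    ∃ c, Tendsto (fun n : ℕ => f n / n) atTop (nhds c) ∧ ∀ n : ℕ, 0 < n → n * c ≤ f n + K := by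
  -- Fekete's lemma needs subadditivity at index `0` as well, where `f` is unconstrained.
  set u : ℕ → ℝ := fun n => if n = 0 then 0 else f n + K
  have hu0 : u 0 = 0 := if_pos rfl
  have hu : ∀ n : ℕ, 0 < n → u n = f n + K := fun n hn => if_neg hn.ne'
  have hsub : Subadditive u := fun k m => by
    rcases k.eq_zero_or_pos with rfl | hk
    · rw [zero_add, hu0, zero_add]
    rcases m.eq_zero_or_pos with rfl | hm
    · rw [add_zero, hu0, add_zero]
    rw [hu _ (add_pos hk hm), hu k hk, hu m hm]
    linarith [(abs_le.1 (h k m hk hm)).2]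
  have hbdd : BddBelow (Set.range fun n : ℕ => u n / n) := by
    refine ⟨min (f 1 - K) 0, ?_⟩
    rintro _ ⟨n, rfl⟩
    rcases n.eq_zero_or_pos with rfl | hn
    · simp [hu0]
    · refine min_le_of_left_le ((le_div_iff₀ (Nat.cast_pos.2 hn)).2 ?_)
      linarith [h.natCast_mul_sub_le hn, hu n hn, h.nonneg]
  refine ⟨hsub.lim, ?_, fun n hn => ?_⟩
  · have hlim := (hsub.tendsto_lim hbdd).sub (tendsto_const_div_atTop_nhds_zero_nat K)
    rw [sub_zero] at hlim
    refine hlim.congr' ?_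
    filter_upwards [eventually_gt_atTop 0] with n hn
    rw [hu n hn, ← sub_div, add_sub_cancel_right]
  · rw [mul_comm, ← le_div_iff₀ (Nat.cast_pos.2 hn), ← hu n hn]
    exact hsub.lim_le_div hbdd hn.ne'

lemma exists_abs_sub_natCast_mul_le (h : AlmostAdditive f K) :
    ∃ c, ∀ n : ℕ, 0 < n → |f n - n * c| ≤ K := by
  obtain ⟨c, hc, hlow⟩ := h.exists_tendsto_div_and_le
  obtain ⟨e, he, hup⟩ := h.neg.exists_tendsto_div_and_le
  obtain rfl : e = -c := tendsto_nhds_unique he (hc.neg.congr fun n => (neg_div _ _).symm)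
  refine ⟨c, fun n hn => abs_le.2 ⟨by linarith [hlow n hn], ?_⟩⟩
  have := hup n hn
  simp only [Pi.neg_apply] at this
  linarith

end AlmostAdditive

lemma exists_eq_mul_add_of_pos {m n : ℕ} (hm : 0 < m) (hn : 0 < n) :
    ∃ j r, n = j * m + r ∧ 0 < r ∧ r ≤ m := by
  refine ⟨(n - 1) / m, (n - 1) % m + 1, ?_, Nat.succ_pos _, Nat.mod_lt _ hm⟩
  have := Nat.div_add_mod' (n - 1) m
  omega

lemma mul_div_sub_abs_le {m r j : ℕ} (hm : 0 < m) (hr : r ≤ m) (x : ℝ) :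
    (j * m + r : ℕ) * (x / m) - |x| ≤ j * x := by
  have hm' : (0 : ℝ) < m := Nat.cast_pos.2 hm
  have hrx : (r : ℝ) / m * x ≤ |x| :=
    calc (r : ℝ) / m * x ≤ r / m * |x| := by gcongr; exact le_abs_self x
      _ ≤ |x| := mul_le_of_le_one_left (abs_nonneg x)
          ((div_le_one hm').2 (Nat.cast_le.2 hr))
  have hsplit : (j * m + r : ℕ) * (x / m) = j * x + r / m * x := by
    push_cast
    field_simp
  linarith

lemma abs_div_natCast_sub_le {x c K : ℝ} {n : ℕ} (hn : 0 < n) (h : |x - n * c| ≤ K) :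
    |x / n - c| ≤ K / n := by
  have hn' : (0 : ℝ) < n := Nat.cast_pos.2 hn
  rwa [div_sub' hn'.ne', abs_div, abs_of_pos hn', div_le_div_iff_of_pos_right hn']

lemma tendsto_div_of_abs_sub_natCast_mul_le {f : ℕ → ℝ} {c K : ℝ}
    (h : ∀ n : ℕ, 0 < n → |f n - n * c| ≤ K) : Tendsto (fun n : ℕ => f n / n) atTop (nhds c) := by
  rw [tendsto_iff_dist_tendsto_zero]
  refine squeeze_zero' (.of_forall fun _ => dist_nonneg) ?_
    (tendsto_const_div_atTop_nhds_zero_nat K)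
  filter_upwards [eventually_gt_atTop 0] with n hn using abs_div_natCast_sub_le hn (h n hn)

lemma continuousOn_of_abs_sub_natCast_mul_le {X : Type*} [TopologicalSpace X] {s : Set X}
    {f : ℕ → X → ℝ} {C : X → ℝ} {K : ℝ} (hf : ∀ n : ℕ, 0 < n → ContinuousOn (f n) s)
    (h : ∀ x ∈ s, ∀ n : ℕ, 0 < n → |f n x - n * C x| ≤ K) : ContinuousOn C s := by
  have hunif : TendstoUniformlyOn (fun (n : ℕ) x => f n x / n) C atTop s := by
    rw [Metric.tendstoUniformlyOn_iff]
    intro ε hε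
    filter_upwards [(tendsto_const_div_atTop_nhds_zero_nat K).eventually_lt_const hε,
      eventually_gt_atTop 0] with n hnε hn x hx
    rw [dist_comm]
    exact (abs_div_natCast_sub_le hn (h x hx n hn)).trans_lt hnε
  refine hunif.continuousOn (Eventually.frequently ?_)
  filter_upwards [eventually_gt_atTop 0] with n hn using (hf n hn).div_const _

lemma tendsto_div_of_le_of_sub_sqrt_le {p : ℕ → ℝ} {c K : ℝ}
    (hup : ∀ n : ℕ, 0 < n → p n ≤ n * c + K)
    (hlow : ∀ m : ℕ, 0 < m → ∃ D : ℝ, ∀ n : ℕ, 0 < n → n * (c - K / m) - D * √n ≤ p n) :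
    Tendsto (fun n : ℕ => p n / n) atTop (nhds c) := by
  have hK := tendsto_const_div_atTop_nhds_zero_nat K
  refine tendsto_order.2 ⟨fun a ha => ?_, fun a ha => ?_⟩
  · have hm : ∀ᶠ m : ℕ in atTop, a < c - K / m :=
      (by simpa using hK.const_sub c : Tendsto _ _ (nhds c)).eventually_const_lt ha
    obtain ⟨m, hma, hm0⟩ := (hm.and (eventually_gt_atTop 0)).exists
    obtain ⟨D, hD⟩ := hlow m hm0
    have hlim : Tendsto (fun n : ℕ => c - K / m - D * (√n)⁻¹) atTop (nhds (c - K / m)) := by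
      simpa using ((tendsto_inv_atTop_zero.comp (Real.tendsto_sqrt_atTop.comp
        tendsto_natCast_atTop_atTop)).const_mul D).const_sub (c - K / m)
    filter_upwards [hlim.eventually_const_lt hma, eventually_gt_atTop 0] with n hn hn0
    refine hn.trans_le ((le_div_iff₀ (Nat.cast_pos.2 hn0)).2 ((le_of_eq ?_).trans (hD n hn0)))
    rw [sub_mul, mul_comm (n : ℝ), mul_assoc D, inv_mul_eq_div, Real.div_sqrt]
  · have hlim : Tendsto (fun n : ℕ => c + K / n) atTop (nhds c) := by simpa using hK.const_add c
    filter_upwards [hlim.eventually_lt_const ha, eventually_gt_atTop 0] with n hn hn0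
    have hn' : (0 : ℝ) < n := Nat.cast_pos.2 hn0
    refine lt_of_le_of_lt ((div_le_iff₀ hn').2 ?_) hn
    rw [add_mul, div_mul_cancel₀ _ hn'.ne', mul_comm c]
    exact hup n hn0

end AlmostAdditiveSequences

section TensorProducts

open scoped MatrixOrder Matrix.Norms.L2Operator Kronecker

/-- The canonical identification of multi-indices of length `n` with pairs of multi-indices of
lengths `k` and `n - k`. -/
def splitEquiv (d : ℕ) {n k : ℕ} (h : k ≤ n) :
    (Fin n → Fin d) ≃ (Fin k → Fin d) × (Fin (n - k) → Fin d) :=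
  ((finCongr (Nat.add_sub_of_le h)).symm.arrowCongr (Equiv.refl _)).trans
    (Fin.appendEquiv k (n - k)).symm

variable {d n k : ℕ} (h : k ≤ n) {A B M : Matrix (Fin k → Fin d) (Fin k → Fin d) ℂ}
  {A' B' N N' : Matrix (Fin (n - k) → Fin d) (Fin (n - k) → Fin d) ℂ}

lemma tkron_eq_submatrix :
    tkron h M N = (M ⊗ₖ N).submatrix (splitEquiv d h) (splitEquiv d h) :=
  rfl

lemma posDef_tkron (hM : M.PosDef) (hN : N.PosDef) : (tkron h M N).PosDef :=
  (hM.kronecker hN).submatrix (splitEquiv d h).injective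

lemma tkron_mono_right (hM : 0 ≤ M) (hN : N ≤ N') : tkron h M N ≤ tkron h M N' := by
  have hsub : tkron h M N' - tkron h M N
      = (M ⊗ₖ (N' - N)).submatrix (splitEquiv d h) (splitEquiv d h) := by
    ext
    exact (mul_sub _ _ _).symm
  rw [le_iff, hsub]
  exact ((nonneg_iff_posSemidef.1 hM).kronecker (le_iff.1 hN)).submatrix _

lemma chernoffTrace_tkron (hA : 0 ≤ A) (hB : 0 ≤ B) (hA' : 0 ≤ A') (hB' : 0 ≤ B') (t : ℝ) :
    chernoffTrace (tkron h A A') (tkron h B B') t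
      = chernoffTrace A B t * chernoffTrace A' B' t := by
  rw [tkron_eq_submatrix, tkron_eq_submatrix, chernoffTrace_submatrix,
    chernoffTrace_kronecker hA hB hA' hB'] <;>
  exact nonneg_iff_posSemidef.2 (.kronecker (nonneg_iff_posSemidef.1 ‹_›)
    (nonneg_iff_posSemidef.1 ‹_›))

lemma chernoffTrace_smul_tkron (hA : A.PosDef) (hB : B.PosDef) (hA' : A'.PosDef)
    (hB' : B'.PosDef) {c : ℝ} (hc : 0 < c) (t : ℝ) :
    chernoffTrace (c • tkron h A A') (c • tkron h B B') t
      = c * (chernoffTrace A B t * chernoffTrace A' B' t) := by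
  rw [chernoffTrace_smul (posDef_tkron h hA hA').posSemidef.nonneg
    (posDef_tkron h hB hB').posSemidef.nonneg hc, chernoffTrace_tkron h hA.posSemidef.nonneg
    hB.posSemidef.nonneg hA'.posSemidef.nonneg hB'.posSemidef.nonneg]

end TensorProducts

section FactorizingStates

open scoped MatrixOrder Matrix.Norms.L2Operator

variable {d : ℕ} {ω σ : (n : ℕ) → Matrix (Fin n → Fin d) (Fin n → Fin d) ℂ} {α β : ℝ}

lemma LowerFact.smul_tkron_le (hω : LowerFact ω α) {n k : ℕ} (hk : 0 < k) (hkn : k < n) :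
    α • tkron hkn.le (ω k) (ω (n - k)) ≤ ω n :=
  le_iff.2 (hω n k hk hkn)

lemma UpperFact.le_smul_tkron (hω : UpperFact ω β) {n k : ℕ} (hk : 0 < k) (hkn : k < n) :
    ω n ≤ β • tkron hkn.le (ω k) (ω (n - k)) :=
  le_iff.2 (hω n k hk hkn)

lemma LowerFact.posDef (hω : LowerFact ω α) (hα : 0 < α) (h1 : (ω 1).PosDef) {n : ℕ}
    (hn : 0 < n) : (ω n).PosDef := by
  induction n, hn using Nat.le_induction with
  | base => exact h1
  | succ n hn ih =>
    simpa using ((posDef_tkron (n := n + 1) (k := 1) (by omega) h1 ih).smul hα).add_posSemidef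
      (hω (n + 1) 1 one_pos (by omega))

/-- `A` is `α ^ j` times the tensor product of `j` copies of `ω m` and one copy of `ω r`, and `B` is
the same product for `σ`. -/
lemma LowerFact.exists_block_minorants (hωl : LowerFact ω α) (hσl : LowerFact σ α) (hα : 0 < α)
    (hω : ∀ n, 0 < n → (ω n).PosDef) (hσ : ∀ n, 0 < n → (σ n).PosDef) {m r : ℕ} (hm : 0 < m)
    (hr : 0 < r) (j : ℕ) {n : ℕ} (hn : n = j * m + r) :
    ∃ A B, A.PosDef ∧ B.PosDef ∧ A ≤ ω n ∧ B ≤ σ n ∧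
      chernoffTrace A B = (α • chernoffTrace (ω m) (σ m)) ^ j * chernoffTrace (ω r) (σ r) := by
  induction j generalizing n with
  | zero =>
    obtain rfl : n = r := by simpa using hn
    exact ⟨ω n, σ n, hω n hr, hσ n hr, le_rfl, le_rfl, by rw [pow_zero, one_mul]⟩
  | succ j ih =>
    rw [Nat.succ_mul] at hn
    have hmn : m < n := by omega
    obtain ⟨A, B, hA, hB, hAω, hBσ, hAB⟩ := ih (n := n - m) (by omega)
    have hωm := hω m hm
    have hσm := hσ m hm
    refine ⟨α • tkron hmn.le (ω m) A, α • tkron hmn.le (σ m) B,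
      (posDef_tkron hmn.le hωm hA).smul hα, (posDef_tkron hmn.le hσm hB).smul hα, ?_, ?_, ?_⟩
    · exact (smul_le_smul_of_nonneg_left (tkron_mono_right _ hωm.posSemidef.nonneg hAω)
        hα.le).trans (hωl.smul_tkron_le hm hmn)
    · exact (smul_le_smul_of_nonneg_left (tkron_mono_right _ hσm.posSemidef.nonneg hBσ)
        hα.le).trans (hσl.smul_tkron_le hm hmn)
    · ext t
      rw [chernoffTrace_smul_tkron hmn.le hωm hσm hA hB hα, hAB, pow_succ']
      simp only [Pi.mul_apply, Pi.smul_apply, smul_eq_mul]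
      ring

variable [NeZero d]

lemma almostAdditive_log_chernoffTrace (hω : ∀ n, 0 < n → (ω n).PosDef)
    (hσ : ∀ n, 0 < n → (σ n).PosDef) (hωu : UpperFact ω β) (hσu : UpperFact σ β) (hβ : 1 ≤ β)
    (hωl : LowerFact ω α) (hσl : LowerFact σ α) (hα : 0 < α) (hα1 : α ≤ 1) {t : ℝ}
    (ht : t ∈ Set.Icc (0 : ℝ) 1) :
    AlmostAdditive (fun n => Real.log (chernoffTrace (ω n) (σ n) t))
      (Real.log β - Real.log α) := fun k m hk hm => by
  set F := fun n => chernoffTrace (ω n) (σ n) t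
  change |Real.log (F (k + m)) - (Real.log (F k) + Real.log (F m))| ≤ _
  have hF : ∀ n, 0 < n → 0 < F n := fun n hn => chernoffTrace_pos (hω n hn) (hσ n hn) t
  have hkm : k < k + m := Nat.lt_add_of_pos_right hm
  have hm' : 0 < k + m - k := by omega
  have hβ0 : 0 < β := zero_lt_one.trans_le hβ
  have hup : F (k + m) ≤ β * (F k * F m) := by
    have := chernoffTrace_mono (hωu.le_smul_tkron hk hkm) (hσu.le_smul_tkron hk hkm) ht
    rwa [chernoffTrace_smul_tkron hkm.le (hω k hk) (hσ k hk) (hω _ hm') (hσ _ hm') hβ0,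
      Nat.add_sub_cancel_left] at this
  have hlow : α * (F k * F m) ≤ F (k + m) := by
    have := chernoffTrace_mono (hωl.smul_tkron_le hk hkm) (hσl.smul_tkron_le hk hkm) ht
    rwa [chernoffTrace_smul_tkron hkm.le (hω k hk) (hσ k hk) (hω _ hm') (hσ _ hm') hα,
      Nat.add_sub_cancel_left] at this
  have hFF : 0 < F k * F m := mul_pos (hF k hk) (hF m hm)
  have hlogup := Real.log_le_log (hF _ (by omega)) hup
  have hloglow := Real.log_le_log (mul_pos hα hFF) hlow
  rw [Real.log_mul hβ0.ne' hFF.ne', Real.log_mul (hF k hk).ne' (hF m hm).ne'] at hlogup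
  rw [Real.log_mul hα.ne' hFF.ne', Real.log_mul (hF k hk).ne' (hF m hm).ne'] at hloglow
  rw [abs_le]
  constructor <;> linarith [Real.log_nonneg hβ, Real.log_nonpos hα.le hα1]

end FactorizingStates

section ErrorExponent

open scoped MatrixOrder Matrix.Norms.L2Operator

variable {d : ℕ} [NeZero d] {ω σ : (n : ℕ) → Matrix (Fin n → Fin d) (Fin n → Fin d) ℂ}
  {α : ℝ}

lemma le_log_Pmin_of_deriv_eq_zero (hωl : LowerFact ω α) (hσl : LowerFact σ α) (hα : 0 < α)
    (hω : ∀ n, 0 < n → (ω n).PosDef) (hσ : ∀ n, 0 < n → (σ n).PosDef) {m r : ℕ} (hm : 0 < m)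
    (hr : 0 < r) {t : ℝ} (ht : t ∈ Set.Icc (0 : ℝ) 1)
    (hcrit : deriv (chernoffTrace (ω m) (σ m)) t = 0) (j : ℕ) {L : ℝ} (hL : 0 < L)
    (hcurv : 2 * (j * (iteratedDeriv 2 (chernoffTrace (ω m) (σ m)) t / chernoffTrace (ω m) (σ m) t)
      + iteratedDeriv 2 (chernoffTrace (ω r) (σ r)) t / chernoffTrace (ω r) (σ r) t) ≤ L ^ 2) :
    j * (Real.log α + Real.log (chernoffTrace (ω m) (σ m) t))
        + Real.log (chernoffTrace (ω r) (σ r) t) - L - Real.log 8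
      ≤ Real.log (Pmin (ω (j * m + r)) (σ (j * m + r))) := by
  obtain ⟨A, B, hA, hB, hAω, hBσ, hAB⟩ :=
    hωl.exists_block_minorants hσl hα hω hσ hm hr j rfl
  set f := chernoffTrace (ω m) (σ m)
  set g := chernoffTrace (ω r) (σ r)
  have hf : ContDiff ℝ 2 f := contDiff_chernoffTrace (hω m hm) (hσ m hm)
  have hg : ContDiff ℝ 2 g := contDiff_chernoffTrace (hω r hr) (hσ r hr)
  have hft : 0 < f t := chernoffTrace_pos (hω m hm) (hσ m hm) t
  have hgt : 0 < g t := chernoffTrace_pos (hω r hr) (hσ r hr) t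
  have hαf : 0 < (α • f) t := mul_pos hα hft
  have hαfd : ContDiffAt ℝ 2 (α • f) t := (hf.const_smul α).contDiffAt
  have hαf' : deriv (α • f) t = 0 := by rw [deriv_const_smul_field, hcrit, smul_zero]
  have hαft : iteratedDeriv 2 (α • f) t / (α • f) t = iteratedDeriv 2 f t / f t := by
    rw [iteratedDeriv_const_smul hf.contDiffAt, Pi.smul_apply, smul_eq_mul, smul_eq_mul,
      mul_div_mul_left _ _ hα.ne']
  have hABt : 0 < chernoffTrace A B t := chernoffTrace_pos hA hB t
  have hcurvAB : 2 * iteratedDeriv 2 (chernoffTrace A B) t ≤ L ^ 2 * chernoffTrace A B t := by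
    have hratio := iteratedDeriv_two_pow_mul_div_of_deriv_eq_zero hαfd hg.contDiffAt hαf'
      hαf.ne' hgt.ne' j
    rw [← hAB, hαft, div_eq_iff hABt.ne'] at hratio
    rw [hratio, ← mul_assoc]
    exact mul_le_mul_of_nonneg_right hcurv hABt.le
  have hP := (exp_neg_mul_chernoffTrace_le_Pmin hA hB ht hL hcurvAB).trans
    (Pmin_mono hA.posSemidef.nonneg hAω hB.posSemidef.nonneg hBσ)
  refine (le_of_eq ?_).trans (Real.log_le_log (by positivity) hP)
  rw [Real.log_div (by positivity) (by norm_num), Real.log_mul (Real.exp_pos _).ne' hABt.ne',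
    Real.log_exp, hAB, Pi.mul_apply, Pi.pow_apply, Real.log_mul (by positivity) hgt.ne',
    Real.log_pow, Pi.smul_apply, smul_eq_mul, Real.log_mul hα.ne' hft.ne']
  ring

lemma exists_sub_sqrt_le_log_Pmin (hωl : LowerFact ω α) (hσl : LowerFact σ α) (hα : 0 < α)
    (hω : ∀ n, 0 < n → (ω n).PosDef) (hσ : ∀ n, 0 < n → (σ n).PosDef) {m : ℕ} (hm : 0 < m)
    (htr : (ω m).trace = (σ m).trace) :
    ∃ t ∈ Set.Icc (0 : ℝ) 1, ∃ D : ℝ, ∀ n : ℕ, 0 < n →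
      n * ((Real.log α + Real.log (chernoffTrace (ω m) (σ m) t)) / m) - D * √n
        ≤ Real.log (Pmin (ω n) (σ n)) := by
  obtain ⟨t, ht, hcrit⟩ := exists_deriv_chernoffTrace_eq_zero (hω m hm) (hσ m hm) htr
  set F := fun r => chernoffTrace (ω r) (σ r)
  set R := fun r => iteratedDeriv 2 (F r) t / F r t
  set x := Real.log α + Real.log (F m t)
  obtain ⟨K, hK⟩ := ((Set.finite_Iic m).image fun r => max |Real.log (F r t)| |R r|).bddAbove
  have hlog : ∀ r ≤ m, |Real.log (F r t)| ≤ K := fun r hr =>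
    (le_max_left _ _).trans (hK ⟨r, hr, rfl⟩)
  have hR : ∀ r ≤ m, R r ≤ K := fun r hr =>
    ((le_abs_self _).trans (le_max_right _ _)).trans (hK ⟨r, hr, rfl⟩)
  have hK0 : 0 ≤ K := (abs_nonneg _).trans (hlog m le_rfl)
  refine ⟨t, ht, |x| + K + Real.log 8 + √(2 * (K + 1)), fun n hn => ?_⟩
  obtain ⟨j, r, rfl, hr, hrm⟩ := exists_eq_mul_add_of_pos hm hn
  set n := j * m + r
  have hjn : (j : ℝ) + 1 ≤ n := by
    have : j ≤ j * m := Nat.le_mul_of_pos_right j hm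
    exact_mod_cast (by omega : j + 1 ≤ n)
  have hn1 : 1 ≤ √n := Real.one_le_sqrt.2 (Nat.one_le_cast.2 hn)
  have hcurv : 2 * (j * R m + R r) ≤ (√(2 * (K + 1)) * √n) ^ 2 := by
    rw [mul_pow, Real.sq_sqrt (by positivity), Real.sq_sqrt n.cast_nonneg]
    calc 2 * (j * R m + R r) ≤ 2 * (j * K + K) := by
          gcongr
          exacts [hR m le_rfl, hR r hrm]
      _ = 2 * K * (j + 1) := by ring
      _ ≤ 2 * (K + 1) * n := by gcongr; exact le_add_of_nonneg_right zero_le_one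
  have hblock := le_log_Pmin_of_deriv_eq_zero hωl hσl hα hω hσ hm hr ht hcrit j
    (by positivity) hcurv
  have hround := mul_div_sub_abs_le (j := j) hm hrm x
  have hconst : |x| + K + Real.log 8 ≤ (|x| + K + Real.log 8) * √n :=
    le_mul_of_one_le_right (by positivity) hn1
  linarith [(abs_le.1 (hlog r hrm)).1]

theorem tendsto_log_Pmin_div (hωl : LowerFact ω α) (hσl : LowerFact σ α) (hα : 0 < α)
    (hω : ∀ n, 0 < n → (ω n).PosDef) (hσ : ∀ n, 0 < n → (σ n).PosDef)
    (htr : ∀ n, 0 < n → (ω n).trace = (σ n).trace) {C : ℝ → ℝ} {K : ℝ}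
    (hC : ∀ t ∈ Set.Icc (0 : ℝ) 1, ∀ n : ℕ, 0 < n →
      |Real.log (chernoffTrace (ω n) (σ n) t) - n * C t| ≤ K)
    {t₀ : ℝ} (ht₀ : t₀ ∈ Set.Icc (0 : ℝ) 1) (hmin : ∀ t ∈ Set.Icc (0 : ℝ) 1, C t₀ ≤ C t) :
    Tendsto (fun n : ℕ => Real.log (Pmin (ω n) (σ n)) / n) atTop (nhds (C t₀)) := by
  refine tendsto_div_of_le_of_sub_sqrt_le (K := max K (K - Real.log α)) (fun n hn => ?_)
    fun m hm => ?_
  · linarith [log_Pmin_le_log_chernoffTrace (hω n hn) (hσ n hn) ht₀,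
      (abs_le.1 (hC t₀ ht₀ n hn)).2, le_max_left K (K - Real.log α)]
  · obtain ⟨t, ht, D, hD⟩ := exists_sub_sqrt_le_log_Pmin hωl hσl hα hω hσ hm (htr m hm)
    refine ⟨D, fun n hn => le_trans ?_ (hD n hn)⟩
    have hm' : (0 : ℝ) < m := Nat.cast_pos.2 hm
    gcongr
    rw [sub_div' hm'.ne']
    gcongr
    have hCm : C t₀ * m ≤ C t * m := mul_le_mul_of_nonneg_right (hmin t ht) hm'.le
    linarith [(abs_le.1 (hC t ht m hm)).1, le_max_right K (K - Real.log α)]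

end ErrorExponent

/-- Chernoff bound under upper and lower factorization. -/
theorem chernoff_bound_of_upper_and_lowerFact
    (d : ℕ)
    (ω σ : (n : ℕ) → Matrix (Fin n → Fin d) (Fin n → Fin d) ℂ)
    (hω : ∀ n, 1 ≤ n → (ω n).PosSemidef ∧ (ω n).trace = 1)
    (hσ : ∀ n, 1 ≤ n → (σ n).PosSemidef ∧ (σ n).trace = 1)
    (β : ℝ) (hβ : 1 ≤ β) (hωfu : UpperFact ω β) (hσfu : UpperFact σ β)
    (α : ℝ) (hα0 : 0 < α) (hα1 : α ≤ 1) (hωfl : LowerFact ω α) (hσfl : LowerFact σ α)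
    (hω1 : (ω 1).PosDef) (hσ1 : (σ 1).PosDef) :
    ∃ C : ℝ → ℝ,
      (∀ t ∈ Set.Icc (0 : ℝ) 1,
        Tendsto
          (fun n : ℕ =>
            (1 / (n : ℝ)) * Real.log (((mpow (ω n) (1 - t) * mpow (σ n) t).trace).re))
          atTop (nhds (C t))) ∧
      ContinuousOn C (Set.Icc (0 : ℝ) 1) ∧
      ∃ t₀ ∈ Set.Icc (0 : ℝ) 1,
        (∀ t ∈ Set.Icc (0 : ℝ) 1, C t₀ ≤ C t) ∧
        Tendsto (fun n : ℕ => (1 / (n : ℝ)) * Real.log (Pmin (ω n) (σ n)))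
          atTop (nhds (C t₀)) := by
  have : NeZero d := ⟨by
    rintro rfl
    simpa [Matrix.trace] using (hω 1 le_rfl).2⟩
  have hωp : ∀ n, 0 < n → (ω n).PosDef := fun n hn => hωfl.posDef hα0 hω1 hn
  have hσp : ∀ n, 0 < n → (σ n).PosDef := fun n hn => hσfl.posDef hα0 hσ1 hn
  have hadd := fun t (ht : t ∈ Set.Icc (0 : ℝ) 1) => (almostAdditive_log_chernoffTrace hωp hσp
    hωfu hσfu hβ hωfl hσfl hα0 hα1 ht).exists_abs_sub_natCast_mul_le
  choose! C hC using hadd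
  have hcont : ContinuousOn C (Set.Icc (0 : ℝ) 1) :=
    continuousOn_of_abs_sub_natCast_mul_le (fun n hn =>
      (continuous_log_chernoffTrace (hωp n hn) (hσp n hn)).continuousOn) hC
  obtain ⟨t₀, ht₀, hmin⟩ := isCompact_Icc.exists_isMinOn ⟨0, by simp⟩ hcont
  have hPmin := tendsto_log_Pmin_div hωfl hσfl hα0 hωp hσp
    (fun n hn => (hω n hn).2.trans (hσ n hn).2.symm) hC ht₀ fun t ht => hmin ht
  simp only [one_div_mul_eq_div]
  refine ⟨C, fun t ht => ?_, hcont, t₀, ht₀, fun t ht => hmin ht, hPmin⟩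
  have hcongr : ∀ n, 0 < n →
      (mpow (ω n) (1 - t) * mpow (σ n) t).trace.re = chernoffTrace (ω n) (σ n) t :=
    fun n hn => trace_mpow_mul_mpow (hωp n hn) (hσp n hn) t
  exact tendsto_div_of_abs_sub_natCast_mul_le fun n hn => by
    simpa only [hcongr n hn] using hC t ht n hn
end

section
/- Let X be a finite nonempty set, T : X × X → ℝ a row-stochastic matrix (T_{xy} ≥ 0 and Σ_y T_{xy} = 1 for all x), and r : X → ℝ a strictly positive probability distribution with Σ_x r_x·T_{xy} = r_y for all y. For n ≥ 1 and x ∈ X^n define the Markov weight μ_n(x) := r_{x_1}·∏_{i=1}^{n−1} T_{x_i x_{i+1}}. Then the following are equivalent: (1) there exists α > 0 such that for all m ≥ 1, all k ≥ 1 and all x ∈ X^{km}: μ_{km}(x) ≥ α^{k−1}·∏_{j=0}^{k−1} μ_m(x_{jm+1}, …, x_{(j+1)m}); (2) T_{xy} > 0 for all x, y ∈ X. -/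
/-!
Cutting a word after the letter `x`, with `y` the next letter, replaces the factor `T x y` of its
weight by `r y`. So, for strictly positive `r`, the lower factorization property with constant `α`
says exactly that `α * r y ≤ T x y` for all `x`, `y`: words of two letters give one direction, one
cut at a time the other. Over a finite alphabet such an `α > 0` exists iff `T` is positive.
-/

theorem blockIdx_lt {j k i m : ℕ} (hj : j < k) (hi : i < m) : j * m + i < k * m :=
  calc j * m + i < j * m + m := by omega
    _ = (j + 1) * m := by ring
    _ ≤ k * m := Nat.mul_le_mul_right m hj

/-- The Markov weight `μ_n(x) = r_{x₁} · ∏_{i=1}^{n-1} T_{x_i x_{i+1}}` of a word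
`x ∈ X^n` (with the convention `μ_0 = 1`). -/
def markovWeight {X : Type*} [Fintype X] (r : X → ℝ) (T : X → X → ℝ) :
    (n : ℕ) → (Fin n → X) → ℝ
  | n, x =>
    if h : n = 0 then 1
    else
      r (x ⟨0, Nat.pos_of_ne_zero h⟩) *
        ∏ i : Fin (n - 1),
          T (x ⟨i.1, by have := i.2; omega⟩) (x ⟨i.1 + 1, by have := i.2; omega⟩)

section

variable {X : Type*} [Fintype X] {r : X → ℝ} {T : X → X → ℝ} {α : ℝ}

/-- The lower factorization property with constant `α`: cutting a word into `k` blocks of equal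
length `m` costs at most a factor `α` per cut. -/
def HasLowerFactorization (r : X → ℝ) (T : X → X → ℝ) (α : ℝ) : Prop :=
  ∀ m : ℕ, 1 ≤ m → ∀ k : ℕ, 1 ≤ k → ∀ x : Fin (k * m) → X,
    α ^ (k - 1) *
        ∏ j : Fin k,
          markovWeight r T m (fun i : Fin m => x ⟨j.1 * m + i.1, blockIdx_lt j.2 i.2⟩)
      ≤ markovWeight r T (k * m) x

/- Words are taken as prefixes of sequences `ℕ → X`, so that blocks are shifts and no casts between
`Fin` types of equal size arise. -/
theorem markovWeight_add_one (r : X → ℝ) (T : X → X → ℝ) (n : ℕ) (y : ℕ → X) :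
    markovWeight r T (n + 1) (fun i => y i) =
      r (y 0) * ∏ i ∈ Finset.range n, T (y i) (y (i + 1)) := by
  rw [← Fin.prod_univ_eq_prod_range (fun i => T (y i) (y (i + 1)))]
  simp [markovWeight]

theorem markovWeight_nonneg (hr : ∀ x, 0 ≤ r x) (hT : ∀ x y, 0 ≤ T x y) (n : ℕ)
    (x : Fin n → X) : 0 ≤ markovWeight r T n x := by
  simp only [markovWeight]
  split_ifs
  · exact zero_le_one
  · exact mul_nonneg (hr _) (Finset.prod_nonneg fun _ _ => hT _ _)

theorem markovWeight_add_one_add (r : X → ℝ) (T : X → X → ℝ) (m n : ℕ) (y : ℕ → X) :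
    markovWeight r T (m + 1 + n) (fun i => y i) =
      markovWeight r T (m + 1) (fun i => y i) *
        ∏ i ∈ Finset.range n, T (y (m + i)) (y (m + i + 1)) := by
  rw [add_right_comm, markovWeight_add_one, markovWeight_add_one, Finset.prod_range_add, mul_assoc]

theorem mul_markovWeight_mul_markovWeight_le (hr : ∀ x, 0 ≤ r x) (hT : ∀ x y, 0 ≤ T x y)
    (hα : ∀ x y, α * r y ≤ T x y) {m n : ℕ} (hm : 0 < m) (hn : 0 < n) (y : ℕ → X) :
    α * (markovWeight r T m (fun i => y i) * markovWeight r T n (fun i => y (m + i))) ≤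
      markovWeight r T (m + n) (fun i => y i) := by
  obtain ⟨m, rfl⟩ := Nat.exists_eq_add_of_le' hm
  obtain ⟨n, rfl⟩ := Nat.exists_eq_add_of_le' hn
  set μ := markovWeight r T (m + 1) fun i => y i
  set Q := ∏ i ∈ Finset.range n, T (y (m + 1 + i)) (y (m + 1 + (i + 1)))
  have hμ : 0 ≤ μ := markovWeight_nonneg hr hT _ _
  have hQ : 0 ≤ Q := Finset.prod_nonneg fun _ _ => hT _ _
  calc α * (μ * markovWeight r T (n + 1) fun i => y (m + 1 + i))
      = μ * (α * r (y (m + 1)) * Q) := by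
        rw [markovWeight_add_one r T n fun i => y (m + 1 + i), add_zero]
        ring
    _ ≤ μ * (T (y m) (y (m + 1)) * Q) := by
        gcongr
        exact hα _ _
    _ = markovWeight r T (m + 1 + (n + 1)) fun i => y i := by
        rw [markovWeight_add_one_add, Finset.prod_range_succ', mul_comm (T _ _), add_zero]
        simp only [μ, Q, add_assoc, add_comm 1]

theorem pow_mul_prod_markovWeight_le (hr : ∀ x, 0 ≤ r x) (hα0 : 0 ≤ α)
    (hα : ∀ x y, α * r y ≤ T x y) {m : ℕ} (hm : 0 < m) (k : ℕ) (y : ℕ → X) :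
    α ^ k * ∏ j ∈ Finset.range (k + 1), markovWeight r T m (fun i => y (j * m + i)) ≤
      markovWeight r T ((k + 1) * m) (fun i => y i) := by
  have hT : ∀ x y, 0 ≤ T x y := fun x y => (mul_nonneg hα0 (hr y)).trans (hα x y)
  induction k with
  | zero =>
    rw [zero_add, one_mul]
    simp
  | succ k ih =>
    set block := fun j => markovWeight r T m fun i => y (j * m + i)
    have hblock : 0 ≤ block (k + 1) := markovWeight_nonneg hr hT _ _
    rw [add_one_mul (k + 1) m]
    calc α ^ (k + 1) * ∏ j ∈ Finset.range (k + 1 + 1), block j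
        = α * ((α ^ k * ∏ j ∈ Finset.range (k + 1), block j) * block (k + 1)) := by
          rw [Finset.prod_range_succ, pow_succ]
          ring
      _ ≤ α * (markovWeight r T ((k + 1) * m) (fun i => y i) * block (k + 1)) := by gcongr
      _ ≤ markovWeight r T ((k + 1) * m + m) (fun i => y i) :=
          mul_markovWeight_mul_markovWeight_le hr hT hα (by positivity) hm y

theorem HasLowerFactorization.of_mul_le (hr : ∀ x, 0 ≤ r x) (hα0 : 0 ≤ α)
    (hα : ∀ x y, α * r y ≤ T x y) : HasLowerFactorization r T α := by
  intro m hm k hk x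
  obtain ⟨k, rfl⟩ := Nat.exists_eq_add_of_le' hk
  have : Nonempty X := ⟨x ⟨0, by positivity⟩⟩
  obtain ⟨y, rfl⟩ := Fin.val_injective.surjective_comp_right x
  have hy := pow_mul_prod_markovWeight_le hr hα0 hα hm k y
  rwa [← Fin.prod_univ_eq_prod_range fun j => markovWeight r T m fun i => y (j * m + i)] at hy

theorem HasLowerFactorization.mul_le (h : HasLowerFactorization r T α) (hr : ∀ x, 0 < r x)
    (x y : X) : α * r y ≤ T x y := by
  have hxy : α * (r x * r y) ≤ r x * T x y := by
    simpa [markovWeight] using h 1 le_rfl 2 one_le_two ![x, y]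
  refine le_of_mul_le_mul_left ?_ (hr x)
  rwa [mul_left_comm] at hxy

theorem hasLowerFactorization_iff_forall_mul_le (hr : ∀ x, 0 < r x) (hα : 0 ≤ α) :
    HasLowerFactorization r T α ↔ ∀ x y, α * r y ≤ T x y :=
  ⟨fun h => h.mul_le hr, .of_mul_le (fun x => (hr x).le) hα⟩

end

theorem exists_pos_forall_mul_le_iff {ι K : Type*} [Finite ι] [Field K] [LinearOrder K]
    [IsStrictOrderedRing K] {f g : ι → K} (hg : ∀ i, 0 < g i) :
    (∃ α, 0 < α ∧ ∀ i, α * g i ≤ f i) ↔ ∀ i, 0 < f i := by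
  refine ⟨fun ⟨α, hα, h⟩ i => (mul_pos hα (hg i)).trans_le (h i), fun hf => ?_⟩
  obtain ⟨α, hα, h⟩ := Pi.exists_forall_pos_add_lt fun i => div_pos (hf i) (hg i)
  refine ⟨α, hα, fun i => ?_⟩
  rw [← le_div_iff₀ (hg i), ← zero_add α]
  exact (h i).le

theorem markov_lowerFact_iff_pos_transition_general {X : Type*} [Fintype X] (T : X → X → ℝ)
    {r : X → ℝ} (hr : ∀ x, 0 < r x) :
    (∃ α : ℝ, 0 < α ∧ HasLowerFactorization r T α) ↔ ∀ x y, 0 < T x y :=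
  calc (∃ α : ℝ, 0 < α ∧ HasLowerFactorization r T α)
      ↔ ∃ α : ℝ, 0 < α ∧ ∀ p : X × X, α * r p.2 ≤ T p.1 p.2 :=
        exists_congr fun α => and_congr_right fun hα => by
          rw [hasLowerFactorization_iff_forall_mul_le hr hα.le, Prod.forall]
    _ ↔ ∀ p : X × X, 0 < T p.1 p.2 := exists_pos_forall_mul_le_iff fun p => hr p.2
    _ ↔ ∀ x y, 0 < T x y := Prod.forall

/-- A stationary Markov measure satisfies the lower factorization
property iff the transition matrix has strictly positive entries. -/
theorem markov_lowerFact_iff_pos_transition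
    (X : Type*) [Fintype X] [Nonempty X]
    (T : X → X → ℝ) (hT0 : ∀ x y, 0 ≤ T x y) (hT1 : ∀ x, ∑ y, T x y = 1)
    (r : X → ℝ) (hr : ∀ x, 0 < r x) (hrsum : ∑ x, r x = 1)
    (hstat : ∀ y, ∑ x, r x * T x y = r y) :
    (∃ α : ℝ, 0 < α ∧ ∀ (m : ℕ), 1 ≤ m → ∀ (k : ℕ), 1 ≤ k →
        ∀ x : Fin (k * m) → X,
          α ^ (k - 1) *
              ∏ j : Fin k,
                markovWeight r T m
                  (fun i : Fin m => x ⟨j.1 * m + i.1, blockIdx_lt j.2 i.2⟩)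
            ≤ markovWeight r T (k * m) x) ↔
      (∀ x y, 0 < T x y) :=
  markov_lowerFact_iff_pos_transition_general T hr
end

section
/- Let X be a finite nonempty set, T : X × X → ℝ a row-stochastic matrix (T_{xy} ≥ 0 and Σ_y T_{xy} = 1 for all x), r : X → ℝ a strictly positive probability distribution with Σ_x r_x·T_{xy} = r_y for all y, and (ϑ̂_{xy})_{x,y∈X} a family of d×d complex density matrices. Then the following are equivalent: (1) there exists α > 0 such that for all x, y ∈ X the matrix T_{xy}·ϑ̂_{xy} − α·Σ_z r_z·T_{zy}·ϑ̂_{zy} is positive semidefinite; (2) T_{xy} > 0 for all x, y ∈ X, and for all x, y, z ∈ X the matrices ϑ̂_{xy} and ϑ̂_{zy} have the same range. -/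
open Matrix
open scoped ComplexOrder

/-!
For positive semidefinite matrices, some positive multiple of `B` lies below `A` in the Loewner
order iff the range of `B` is contained in that of `A`. One direction holds because the range of a
sum of positive semidefinite matrices is the sum of their ranges; for the other, write `A = S * Sᴴ`
and `B = R * Rᴴ`, factor `R = S * C`, and bound `C * Cᴴ` by a multiple of the identity. The
domination condition therefore says that the range of each `T x y • ϑ x y` contains the ranges of
all `T z y • ϑ z y`. As every column of `T` has a nonzero entry, no such range can be zero, so `T`
is positive and the factors `T x y` can be dropped.
-/

section Range

variable {K R m n p : Type*} [Fintype n] [Fintype p]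

lemma range_mulVecLin_mul_le [CommSemiring R] (A : Matrix m n R) (B : Matrix n p R) :
    LinearMap.range (A * B).mulVecLin ≤ LinearMap.range A.mulVecLin := by
  rw [mulVecLin_mul]
  exact LinearMap.range_comp_le_range _ _

lemma exists_eq_mul_of_range_mulVecLin_le [CommSemiring R] {A : Matrix m n R} {B : Matrix m p R}
    (h : LinearMap.range B.mulVecLin ≤ LinearMap.range A.mulVecLin) :
    ∃ C : Matrix n p R, B = A * C := by
  classical
  choose c hc using fun j ↦ h ⟨Pi.single j 1, rfl⟩
  refine ⟨(of c)ᵀ, ?_⟩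
  ext i j
  have hcol := congrFun (hc j) i
  rw [mulVecLin_apply, mulVecLin_apply, mulVec_single_one] at hcol
  exact hcol.symm

lemma range_mulVecLin_fromCols [CommSemiring R] (A : Matrix m n R) (B : Matrix m p R) :
    LinearMap.range (fromCols A B).mulVecLin =
      LinearMap.range A.mulVecLin ⊔ LinearMap.range B.mulVecLin := by
  refine le_antisymm ?_ (sup_le ?_ ?_)
  · rintro _ ⟨v, rfl⟩
    rw [mulVecLin_apply, fromCols_mulVec]
    exact Submodule.add_mem_sup ⟨_, rfl⟩ ⟨_, rfl⟩
  · rintro _ ⟨v, rfl⟩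
    exact ⟨Sum.elim v 0, by simp⟩
  · rintro _ ⟨v, rfl⟩
    exact ⟨Sum.elim 0 v, by simp⟩

lemma range_mulVecLin_self_mul_conjTranspose [Fintype m] [Field K] [PartialOrder K] [StarRing K]
    [StarOrderedRing K] (A : Matrix m n K) :
    LinearMap.range (A * Aᴴ).mulVecLin = LinearMap.range A.mulVecLin :=
  Submodule.eq_of_le_of_finrank_eq (range_mulVecLin_mul_le A Aᴴ) (rank_self_mul_conjTranspose A)

variable [Semifield K] [CommSemiring R] [Module K R] [IsScalarTower K R R]

lemma range_mulVecLin_smul_le (c : K) (A : Matrix m n R) :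
    LinearMap.range (c • A).mulVecLin ≤ LinearMap.range A.mulVecLin := by
  rintro _ ⟨v, rfl⟩
  exact ⟨c • v, by simp [smul_mulVec]⟩

lemma range_mulVecLin_smul {c : K} (hc : c ≠ 0) (A : Matrix m n R) :
    LinearMap.range (c • A).mulVecLin = LinearMap.range A.mulVecLin :=
  (range_mulVecLin_smul_le c A).antisymm <| by
    simpa [smul_smul, hc] using range_mulVecLin_smul_le c⁻¹ (c • A)

lemma range_mulVecLin_eq_bot_iff {A : Matrix m n R} :
    LinearMap.range A.mulVecLin = ⊥ ↔ A = 0 := by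
  classical
  rw [LinearMap.range_eq_bot, ← toLin'_apply', LinearEquiv.map_eq_zero_iff]

lemma forall_range_mulVecLin_smul_le_iff {ι : Type*} {t : ι → K} (ht : ∃ i, t i ≠ 0)
    {A : ι → Matrix m n R} (hA : ∀ i, A i ≠ 0) :
    (∀ i j, LinearMap.range (t j • A j).mulVecLin ≤ LinearMap.range (t i • A i).mulVecLin) ↔
      (∀ i, t i ≠ 0) ∧
        ∀ i j, LinearMap.range (A i).mulVecLin = LinearMap.range (A j).mulVecLin := by
  constructor
  · intro h
    have ht' : ∀ i, t i ≠ 0 := by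
      obtain ⟨k, hk⟩ := ht
      intro i hi
      have hle := h i k
      rw [range_mulVecLin_smul hk, hi, zero_smul, mulVecLin_zero, LinearMap.range_zero,
        le_bot_iff, range_mulVecLin_eq_bot_iff] at hle
      exact hA k hle
    simp only [range_mulVecLin_smul (ht' _)] at h
    exact ⟨ht', fun i j ↦ (h j i).antisymm (h i j)⟩
  · rintro ⟨ht', h⟩ i j
    rw [range_mulVecLin_smul (ht' i), range_mulVecLin_smul (ht' j), h i j]

end Range

open scoped Topology in
lemma exists_pos_forall_smul_le_iff {ι M : Type*} [Finite ι] [Preorder M] [Zero M] [SMul ℝ M]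
    [SMulPosMono ℝ M] {A B : ι → M} (hB : ∀ i, 0 ≤ B i) :
    (∃ c : ℝ, 0 < c ∧ ∀ i, c • B i ≤ A i) ↔ ∀ i, ∃ c : ℝ, 0 < c ∧ c • B i ≤ A i := by
  refine ⟨fun ⟨c, hc, h⟩ i ↦ ⟨c, hc, h i⟩, fun h ↦ ?_⟩
  have hsmall : ∀ᶠ c : ℝ in 𝓝[>] 0, ∀ i, c • B i ≤ A i := by
    refine Filter.eventually_all.mpr fun i ↦ ?_
    obtain ⟨c, hc, hBA⟩ := h i
    filter_upwards [Ioc_mem_nhdsGT hc] with a ha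
    exact (smul_le_smul_of_nonneg_right ha.2 (hB i)).trans hBA
  exact (eventually_mem_nhdsWithin.and hsmall).exists

section Loewner

open scoped MatrixOrder

variable {𝕜 n ι : Type*} [RCLike 𝕜] [Fintype n]

lemma range_mulVecLin_add_of_nonneg {A B : Matrix n n 𝕜} (hA : 0 ≤ A) (hB : 0 ≤ B) :
    LinearMap.range (A + B).mulVecLin =
      LinearMap.range A.mulVecLin ⊔ LinearMap.range B.mulVecLin := by
  classical
  obtain ⟨S, rfl⟩ := CStarAlgebra.nonneg_iff_eq_mul_star_self.mp hA
  obtain ⟨R, rfl⟩ := CStarAlgebra.nonneg_iff_eq_mul_star_self.mp hB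
  have hfromCols : S * Sᴴ + R * Rᴴ = fromCols S R * (fromCols S R)ᴴ := by
    rw [conjTranspose_fromCols_eq_fromRows_conjTranspose, fromCols_mul_fromRows]
  simp only [star_eq_conjTranspose, hfromCols, range_mulVecLin_self_mul_conjTranspose,
    range_mulVecLin_fromCols]

lemma range_mulVecLin_sum_of_nonneg {s : Finset ι} {A : ι → Matrix n n 𝕜}
    (hA : ∀ i ∈ s, 0 ≤ A i) :
    LinearMap.range (∑ i ∈ s, A i).mulVecLin = ⨆ i ∈ s, LinearMap.range (A i).mulVecLin := by
  classical
  induction s using Finset.induction_on with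
  | empty => simp
  | insert i s hi ih =>
    rw [Finset.forall_mem_insert] at hA
    rw [Finset.sum_insert hi, range_mulVecLin_add_of_nonneg hA.1 (Finset.sum_nonneg hA.2),
      ih hA.2, Finset.iSup_insert]

lemma exists_pos_le_smul_one {m : Type*} [Finite m] [DecidableEq m] {A : Matrix m m 𝕜}
    (hA : A.IsHermitian) : ∃ c : ℝ, 0 < c ∧ A ≤ c • (1 : Matrix m m 𝕜) := by
  cases nonempty_fintype m
  obtain ⟨b, hb⟩ := A.finite_real_spectrum.bddAbove
  refine ⟨max b 1, by positivity, ?_⟩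
  rw [← Algebra.algebraMap_eq_smul_one]
  exact le_algebraMap_of_spectrum_le (fun x hx ↦ (hb hx).trans (le_max_left b 1))
    hA.isSelfAdjoint

theorem exists_pos_smul_le_iff_range_mulVecLin_le {A B : Matrix n n 𝕜} (hA : 0 ≤ A)
    (hB : 0 ≤ B) :
    (∃ c : ℝ, 0 < c ∧ c • B ≤ A) ↔
      LinearMap.range B.mulVecLin ≤ LinearMap.range A.mulVecLin := by
  classical
  constructor
  · rintro ⟨c, hc, hBA⟩
    rw [← range_mulVecLin_smul hc.ne' B, ← add_sub_cancel (c • B) A,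
      range_mulVecLin_add_of_nonneg (smul_nonneg hc.le hB) (sub_nonneg.mpr hBA)]
    exact le_sup_left
  · intro hrange
    obtain ⟨S, rfl⟩ := CStarAlgebra.nonneg_iff_eq_mul_star_self.mp hA
    obtain ⟨R, rfl⟩ := CStarAlgebra.nonneg_iff_eq_mul_star_self.mp hB
    simp only [star_eq_conjTranspose, range_mulVecLin_self_mul_conjTranspose] at hrange
    obtain ⟨C, rfl⟩ := exists_eq_mul_of_range_mulVecLin_le hrange
    obtain ⟨c, hc, hC⟩ := exists_pos_le_smul_one (isHermitian_mul_conjTranspose_self C)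
    refine ⟨c⁻¹, inv_pos.mpr hc, (inv_smul_le_iff_of_pos hc).mpr ?_⟩
    calc S * C * star (S * C) = S * (C * star C) * star S := by
          simp only [star_mul, mul_assoc]
      _ ≤ S * (c • 1) * star S := star_right_conjugate_le_conjugate hC S
      _ = c • (S * star S) := by simp

theorem exists_pos_forall_smul_sum_le_iff {X Y : Type*} [Fintype X] [Finite Y]
    {A : X → Y → Matrix n n 𝕜} (hA : ∀ x y, 0 ≤ A x y) {w : X → ℝ} (hw : ∀ x, 0 < w x) :
    (∃ c : ℝ, 0 < c ∧ ∀ x y, c • ∑ z, w z • A z y ≤ A x y) ↔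
      ∀ x y z, LinearMap.range (A z y).mulVecLin ≤ LinearMap.range (A x y).mulVecLin := by
  have hwA x y : 0 ≤ w x • A x y := smul_nonneg (hw x).le (hA x y)
  have hsum y : 0 ≤ ∑ z, w z • A z y := Finset.sum_nonneg fun z _ ↦ hwA z y
  have hrange y : LinearMap.range (∑ z, w z • A z y).mulVecLin =
      ⨆ z, LinearMap.range (A z y).mulVecLin := by
    rw [range_mulVecLin_sum_of_nonneg fun z _ ↦ hwA z y]
    simp only [Finset.mem_univ, iSup_pos, range_mulVecLin_smul (hw _).ne']
  calc
    _ ↔ ∃ c : ℝ, 0 < c ∧ ∀ p : X × Y, c • ∑ z, w z • A z p.2 ≤ A p.1 p.2 := by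
      simp only [Prod.forall]
    _ ↔ ∀ p : X × Y, ∃ c : ℝ, 0 < c ∧ c • ∑ z, w z • A z p.2 ≤ A p.1 p.2 :=
      exists_pos_forall_smul_le_iff fun p ↦ hsum p.2
    _ ↔ ∀ x y, LinearMap.range (∑ z, w z • A z y).mulVecLin ≤
        LinearMap.range (A x y).mulVecLin := by
      simp only [exists_pos_smul_le_iff_range_mulVecLin_le (hA _ _) (hsum _), Prod.forall]
    _ ↔ _ := by
      simp only [hrange, iSup_le_iff]

end Loewner

theorem lowerFact_condition_iff_left_general
    {X Y n 𝕜 : Type*} [Fintype X] [Finite Y] [Fintype n] [RCLike 𝕜]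
    {T : X → Y → ℝ} (hT0 : ∀ x y, 0 ≤ T x y) (hT : ∀ y, ∃ x, T x y ≠ 0)
    {r : X → ℝ} (hr : ∀ x, 0 < r x)
    {ϑ : X → Y → Matrix n n 𝕜} (hϑ : ∀ x y, (ϑ x y).PosSemidef) (hϑ0 : ∀ x y, ϑ x y ≠ 0) :
    (∃ α : ℝ, 0 < α ∧ ∀ x y,
        (T x y • ϑ x y - α • ∑ z, (r z * T z y) • ϑ z y).PosSemidef) ↔
      ((∀ x y, 0 < T x y) ∧
        ∀ x y z, LinearMap.range (ϑ x y).mulVecLin = LinearMap.range (ϑ z y).mulVecLin) := by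
  have hA x y := ((hϑ x y).smul (hT0 x y)).nonneg
  calc
    _ ↔ ∀ x y z, LinearMap.range (T z y • ϑ z y).mulVecLin ≤
        LinearMap.range (T x y • ϑ x y).mulVecLin := by
      simp only [mul_smul, ← Matrix.le_iff]
      exact exists_pos_forall_smul_sum_le_iff hA hr
    _ ↔ ∀ y, (∀ x, T x y ≠ 0) ∧
        ∀ x z, LinearMap.range (ϑ x y).mulVecLin = LinearMap.range (ϑ z y).mulVecLin :=
      forall_comm.trans <| forall_congr' fun y ↦
        forall_range_mulVecLin_smul_le_iff (hT y) (hϑ0 · y)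
    _ ↔ _ := by
      simp only [(hT0 _ _).lt_iff_ne', forall_and]
      exact and_congr forall_comm forall_comm

/-- For a stationary Markov chain with transition matrix `T`, invariant
distribution `r` and emission states `ϑ_{xy}`, the domination condition
`E* ≥ α·(E* ∘ T*)` (expressed entrywise on minimal projections) holds for some `α > 0`
iff `T > 0` and `range ϑ_{xy} = range ϑ_{zy}` for all `x, y, z`. -/
theorem lowerFact_condition_iff_left
    (X : Type*) [Fintype X] [Nonempty X] (d : ℕ)
    (T : X → X → ℝ) (hT0 : ∀ x y, 0 ≤ T x y) (hT1 : ∀ x, ∑ y, T x y = 1)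
    (r : X → ℝ) (hr : ∀ x, 0 < r x) (hrsum : ∑ x, r x = 1)
    (hstat : ∀ y, ∑ x, r x * T x y = r y)
    (ϑ : X → X → Matrix (Fin d) (Fin d) ℂ)
    (hϑ : ∀ x y, (ϑ x y).PosSemidef ∧ (ϑ x y).trace = 1) :
    (∃ α : ℝ, 0 < α ∧ ∀ x y,
        (T x y • ϑ x y - α • ∑ z, (r z * T z y) • ϑ z y).PosSemidef) ↔
      ((∀ x y, 0 < T x y) ∧
        ∀ x y z, LinearMap.range (ϑ x y).mulVecLin = LinearMap.range (ϑ z y).mulVecLin) :=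
  lowerFact_condition_iff_left_general hT0
    (fun y ↦ by by_contra! h; exact (hr y).ne (by simpa [h] using hstat y)) hr
    (fun x y ↦ (hϑ x y).1) fun x y h ↦ by simpa [h] using (hϑ x y).2
end
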